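/- Let c ∈ (0,1) and assume k_c > 0 satisfies a(k_c) = c, m'(k_c) ≠ 0, and m(k) ≠ 0 for all real k ∉ {−k_c, k_c}. Then there exists a constant C_M > 0 such that for every G ∈ L^∞(ℝ) vanishing almost everywhere outside [−1, 1] there exists a unique pair (S, η) ∈ X × ℝ with M S = A²G + η everywhere on ℝ. Moreover, S and η depend linearly on G, and the estimates |η| ≤ C_M ‖A²G‖_∞, ‖S‖_∞ ≤ C_M ‖A²G‖_∞, ‖S'‖_∞ ≤ C_M ‖A G‖_∞, and ‖S''‖_∞ ≤ C_M ‖G‖_∞ hold. -/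

import Mathlib

open MeasureTheory Real Filter Topology

/-- The averaging operator `(A F)(x) = ∫_{x-1/2}^{x+1/2} F(s) ds`. -/
noncomputable def Aop (F : ℝ → ℝ) : ℝ → ℝ := fun x => ∫ s in (x - 1/2)..(x + 1/2), F s

/-- The operator `M F = A(A F) - c² F`. -/
noncomputable def Mop (c : ℝ) (F : ℝ → ℝ) : ℝ → ℝ := fun x => Aop (Aop F) x - c ^ 2 * F x

/-- The symbol `a(k) = sin(k/2)/(k/2)`, with `a(0) = 1`. -/
noncomputable def symb (k : ℝ) : ℝ := if k = 0 then 1 else Real.sin (k / 2) / (k / 2)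

/-- The symbol `m(k) = a(k)² - c²`. -/
noncomputable def msymb (c : ℝ) : ℝ → ℝ := fun k => (symb k) ^ 2 - c ^ 2

/-- Membership in `W^{2,∞}(ℝ)`. -/
def IsW2inf (S : ℝ → ℝ) : Prop :=
  Differentiable ℝ S ∧ (∃ C : ℝ, ∀ x, |S x| ≤ C ∧ |deriv S x| ≤ C) ∧
    ∃ K : NNReal, LipschitzWith K (deriv S)

/-- The space `X` of `S ∈ W^{2,∞}(ℝ)` with `S(0) = 0` such that `lim_{x→+∞} S(x)` exists. -/
def IsX (S : ℝ → ℝ) : Prop := IsW2inf S ∧ S 0 = 0 ∧ ∃ l : ℝ, Tendsto S atTop (nhds l)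

/-!
Dividing its simple zeros `±k` out of the symbol leaves `m(x) = (x² - k²) g(x)` with `g` analytic
and zero-free. Hence `a² / m` is an integrable function, whose inverse Fourier transform tends to
zero, plus a multiple of `1 / (x² - k²)`. The latter is the resonance: it corresponds to a sine of
frequency `k` and can be put on the negative half-line alone. This gives a bounded continuous
kernel `κ` that tends to zero at `+∞` and for which `M κ` is the kernel of `A²`, so that `G ⋆ κ`,
shifted by a constant to vanish at `0`, is the solution.

The estimates come from `c² (G ⋆ κ) = A² (G ⋆ κ - G)`, in which each average can be traded for one
derivative.

For uniqueness, let `M w = 0` with `w` bounded and `w → 0` at `+∞`. Convolving `w` with a kernel `φ`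
whose transform `χ` is smooth with compact support gives a function `u`; on the support of `χ` the
equation can be divided by `g`, and what remains is `u'' + k² u = 0`. The energy `k² u² + u'²` is
constant and tends to zero, so `u = 0`. Letting `φ` concentrate at the origin gives `w = 0`.
-/

open Asymptotics
open scoped Convolution FourierTransform ContDiff

lemma analyticAt_dslope {𝕜 E : Type*} [NontriviallyNormedField 𝕜] [NormedAddCommGroup E]
    [NormedSpace 𝕜 E] {f : 𝕜 → E} {a x : 𝕜} (ha : AnalyticAt 𝕜 f a) (hx : AnalyticAt 𝕜 f x) :
    AnalyticAt 𝕜 (dslope f a) x := by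
  rcases eq_or_ne x a with rfl | hne
  · obtain ⟨p, hp⟩ := hx
    exact ⟨_, hp.has_fpower_series_dslope_fslope⟩
  · have hslope : AnalyticAt 𝕜 (slope f a) x :=
      ((analyticAt_id.sub analyticAt_const).inv (sub_ne_zero.mpr hne)).smul
        (hx.sub analyticAt_const)
    exact hslope.congr (dslope_eventuallyEq_slope_of_ne f hne).symm

lemma exists_analyticAt_eq_sub_mul {𝕜 : Type*} [NontriviallyNormedField 𝕜] {f : 𝕜 → 𝕜}
    (hf : ∀ x, AnalyticAt 𝕜 f x) {a : 𝕜} (ha : f a = 0) :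
    ∃ g : 𝕜 → 𝕜, (∀ x, AnalyticAt 𝕜 g x) ∧ ∀ x, f x = (x - a) * g x :=
  ⟨dslope f a, fun x => analyticAt_dslope (hf a) (hf x), fun x => by
    rw [← smul_eq_mul, sub_smul_dslope, ha, sub_zero]⟩

lemma exists_analyticAt_eq_sq_sub_sq_mul {𝕜 : Type*} [NontriviallyNormedField 𝕜] [CharZero 𝕜]
    {f : 𝕜 → 𝕜} (hf : ∀ x, AnalyticAt 𝕜 f x) {k : 𝕜} (hk : k ≠ 0) (h₁ : f k = 0)
    (h₂ : f (-k) = 0) :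
    ∃ g : 𝕜 → 𝕜, (∀ x, AnalyticAt 𝕜 g x) ∧ ∀ x, f x = (x ^ 2 - k ^ 2) * g x := by
  obtain ⟨g₁, hg₁, hfg₁⟩ := exists_analyticAt_eq_sub_mul hf h₁
  have hg₁k : g₁ (-k) = 0 := by
    have hne : -k - k ≠ 0 := by
      rw [← neg_add', neg_ne_zero, ← two_mul]
      exact mul_ne_zero two_ne_zero hk
    exact (mul_eq_zero.mp ((hfg₁ (-k)).symm.trans h₂)).resolve_left hne
  obtain ⟨g₂, hg₂, hg₁g₂⟩ := exists_analyticAt_eq_sub_mul hg₁ hg₁k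
  exact ⟨g₂, hg₂, fun x => by rw [hfg₁, hg₁g₂]; ring⟩

lemma deriv_neg_of_even {f : ℝ → ℝ} (hf : ∀ x, f (-x) = f x) (x : ℝ) :
    deriv f (-x) = -deriv f x := by
  have h := deriv_comp_neg f x
  simp only [hf] at h
  rw [h, neg_neg]

lemma integrable_of_isBigO_inv_one_add_sq {f : ℝ → ℝ} (hf : Continuous f)
    (hO : f =O[cocompact ℝ] fun x => (1 + x ^ 2)⁻¹) : Integrable f :=
  hf.locallyIntegrable.integrable_of_isBigO_cocompact hO
    (integrable_inv_one_add_sq.integrableAtFilter _)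

lemma tendsto_sq_cocompact : Tendsto (fun x : ℝ => x ^ 2) (cocompact ℝ) atTop := by
  simpa only [Function.comp_def, Real.norm_eq_abs, sq_abs] using
    (tendsto_pow_atTop two_ne_zero).comp (tendsto_norm_cocompact_atTop (E := ℝ))

lemma isBigO_inv_sq_sub (b : ℝ) :
    (fun x : ℝ => (x ^ 2 - b)⁻¹) =O[cocompact ℝ] fun x => (1 + x ^ 2)⁻¹ := by
  refine IsBigO.of_bound 2 ?_
  filter_upwards [tendsto_sq_cocompact.eventually_ge_atTop (2 * |b| + 1)] with x hx
  have hb := le_abs_self b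
  have hpos : 0 < x ^ 2 - b := by nlinarith [abs_nonneg b]
  rw [Real.norm_of_nonneg (inv_nonneg.mpr hpos.le), Real.norm_of_nonneg (by positivity),
    ← div_eq_mul_inv, inv_le_comm₀ hpos (by positivity), inv_div, div_le_iff₀ two_pos]
  linarith

section Symbol

lemma symb_eq_sinc (x : ℝ) : symb x = sinc (x / 2) := by
  simp [symb, sinc_apply]

lemma symb_zero : symb 0 = 1 := if_pos rfl

lemma symb_neg (x : ℝ) : symb (-x) = symb x := by
  rw [symb_eq_sinc, symb_eq_sinc, neg_div, sinc_neg]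

lemma abs_symb_le_one (x : ℝ) : |symb x| ≤ 1 :=
  symb_eq_sinc x ▸ abs_sinc_le_one _

lemma symb_sq_le_one (x : ℝ) : symb x ^ 2 ≤ 1 :=
  (sq_le_one_iff_abs_le_one _).mpr (abs_symb_le_one x)

lemma mul_symb (x : ℝ) : x * symb x = 2 * sin (x / 2) := by
  unfold symb
  split_ifs with h
  · simp [h]
  · field_simp

lemma sq_mul_symb_sq (x : ℝ) : x ^ 2 * symb x ^ 2 = 2 * (1 - cos x) := by
  rw [← mul_pow, mul_symb, mul_pow, sin_sq_eq_half_sub, mul_div_cancel₀ x two_ne_zero]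
  ring

lemma analyticAt_symb (x : ℝ) : AnalyticAt ℝ symb x := by
  have hsymb : symb = dslope sin 0 ∘ fun y => y / 2 := by
    rw [← sinc_eq_dslope]
    exact funext symb_eq_sinc
  exact hsymb ▸ (analyticAt_dslope analyticAt_sin analyticAt_sin).comp
    (analyticAt_id.div analyticAt_const two_ne_zero)

lemma continuous_symb : Continuous symb :=
  continuous_iff_continuousAt.mpr fun x => (analyticAt_symb x).continuousAt

lemma isBigO_symb_sq : (fun x => symb x ^ 2) =O[cocompact ℝ] fun x => (1 + x ^ 2)⁻¹ := by
  refine IsBigO.of_bound 5 (Eventually.of_forall fun x => ?_)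
  rw [Real.norm_of_nonneg (sq_nonneg _), Real.norm_of_nonneg (by positivity), ← div_eq_mul_inv,
    le_div_iff₀ (by positivity)]
  linarith [sq_mul_symb_sq x, neg_one_le_cos x, symb_sq_le_one x]

lemma integrable_symb_sq : Integrable fun x => symb x ^ 2 :=
  integrable_of_isBigO_inv_one_add_sq (continuous_symb.pow 2) isBigO_symb_sq

variable {c k : ℝ}

lemma msymb_neg (c x : ℝ) : msymb c (-x) = msymb c x := by
  rw [msymb, symb_neg, msymb]

lemma analyticAt_msymb (c x : ℝ) : AnalyticAt ℝ (msymb c) x :=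
  ((analyticAt_symb x).pow 2).sub analyticAt_const

lemma isBigO_msymb_one (c : ℝ) : msymb c =O[cocompact ℝ] fun _ => (1 : ℝ) := by
  refine IsBigO.of_bound (1 + c ^ 2) (Eventually.of_forall fun x => ?_)
  rw [norm_one, mul_one, Real.norm_eq_abs, msymb, abs_le]
  constructor <;> linarith [sq_nonneg (symb x), symb_sq_le_one x, sq_nonneg c]

lemma isBigO_inv_msymb_one (hc : c ≠ 0) :
    (fun x => (msymb c x)⁻¹) =O[cocompact ℝ] fun _ => (1 : ℝ) := by
  have hinv : Tendsto (fun x : ℝ => (1 + x ^ 2)⁻¹) (cocompact ℝ) (𝓝 0) :=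
    (tendsto_atTop_add_const_left _ 1 tendsto_sq_cocompact).inv_tendsto_atTop
  have hlim : Tendsto (msymb c) (cocompact ℝ) (𝓝 (0 - c ^ 2)) :=
    (isBigO_symb_sq.trans_tendsto hinv).sub_const _
  exact (hlim.inv₀ (by simpa using hc)).isBigO_one ℝ

lemma ne_zero_of_deriv_msymb_ne_zero (h : deriv (msymb c) k ≠ 0) : k ≠ 0 := by
  rintro rfl
  have h0 := deriv_neg_of_even (msymb_neg c) 0
  rw [neg_zero] at h0
  exact h (by linarith)

lemma speed_ne_zero_of_deriv_msymb_ne_zero (hk : msymb c k = 0) (h : deriv (msymb c) k ≠ 0) :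
    c ≠ 0 := by
  rintro rfl
  have hzero : symb k = 0 := by simpa [msymb] using hk
  refine h ?_
  change deriv (fun x => symb x ^ 2 - 0 ^ 2) k = 0
  simpa [hzero] using
    (((analyticAt_symb k).differentiableAt.hasDerivAt.pow 2).sub_const (0 ^ 2)).deriv

/-- What remains of the symbol `m` after its two simple zeros `±k` are divided out: `g` is analytic
and zero-free, and `m(x) = (x² - k²) g(x)`. -/
structure IsCofactor (c k : ℝ) (g : ℝ → ℝ) : Prop where
  analyticAt : ∀ x, AnalyticAt ℝ g x
  ne_zero : ∀ x, g x ≠ 0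
  msymb_eq : ∀ x, msymb c x = (x ^ 2 - k ^ 2) * g x

lemma exists_isCofactor (hk : msymb c k = 0) (hderiv : deriv (msymb c) k ≠ 0)
    (hroots : ∀ x, x ≠ k → x ≠ -k → msymb c x ≠ 0) : ∃ g, IsCofactor c k g := by
  obtain ⟨g, hg, hmg⟩ := exists_analyticAt_eq_sq_sub_sq_mul (analyticAt_msymb c)
    (ne_zero_of_deriv_msymb_ne_zero hderiv) hk ((msymb_neg c k).trans hk)
  have hderiv_eq (x : ℝ) (hx : x ^ 2 = k ^ 2) : deriv (msymb c) x = 2 * x * g x := by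
    have hprod := ((hasDerivAt_pow 2 x).sub_const (k ^ 2)).mul (hg x).differentiableAt.hasDerivAt
    rw [funext hmg]
    exact hprod.deriv.trans (by simp [hx])
  refine ⟨g, hg, fun x hx => ?_, hmg⟩
  by_cases hxk : x ^ 2 = k ^ 2
  · have hx0 : deriv (msymb c) x = 0 := by rw [hderiv_eq x hxk, hx, mul_zero]
    rcases sq_eq_sq_iff_eq_or_eq_neg.mp hxk with rfl | rfl
    · exact hderiv hx0
    · rw [deriv_neg_of_even (msymb_neg c), neg_eq_zero] at hx0
      exact hderiv hx0
  · exact hroots x (fun h => hxk (by rw [h])) (fun h => hxk (by rw [h, neg_sq]))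
      (by rw [hmg, hx, mul_zero])

namespace IsCofactor

variable {g : ℝ → ℝ} (hg : IsCofactor c k g)
include hg

lemma continuous : Continuous g :=
  continuous_iff_continuousAt.mpr fun x => (hg.analyticAt x).continuousAt

lemma symb_sq_eq : symb k ^ 2 = c ^ 2 := by
  have h := hg.msymb_eq k
  rwa [sub_self, zero_mul, msymb, sub_eq_zero] at h

lemma sq_mul_sq_eq : k ^ 2 * c ^ 2 = 2 * (1 - cos k) := by
  rw [← hg.symb_sq_eq, sq_mul_symb_sq]

lemma isBigO : g =O[cocompact ℝ] fun x => (1 + x ^ 2)⁻¹ := by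
  have hquot : g =ᶠ[cocompact ℝ] fun x => msymb c x * (x ^ 2 - k ^ 2)⁻¹ := by
    filter_upwards [tendsto_sq_cocompact.eventually_gt_atTop (k ^ 2)] with x hx
    rw [hg.msymb_eq, mul_comm (x ^ 2 - k ^ 2), mul_inv_cancel_right₀ (sub_ne_zero.mpr hx.ne')]
  simpa only [one_mul] using
    hquot.trans_isBigO ((isBigO_msymb_one c).mul (isBigO_inv_sq_sub (k ^ 2)))

lemma integrable : Integrable g :=
  integrable_of_isBigO_inv_one_add_sq hg.continuous hg.isBigO

end IsCofactor

end Symbol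

section Convolution

variable {f g h : ℝ → ℝ} {C : ℝ}

lemma convolution_comm (f g : ℝ → ℝ) : f ⋆ g = g ⋆ f := by
  rw [← convolution_flip]
  congr 1
  ext
  simp

lemma bddAbove_range_norm_of_abs_le (hC : ∀ x, |h x| ≤ C) : BddAbove (Set.range fun x => ‖h x‖) :=
  ⟨C, Set.forall_mem_range.mpr hC⟩

lemma convolutionExists_of_integrable_of_bounded (hf : Integrable f)
    (hh : AEStronglyMeasurable h) (hC : ∀ x, |h x| ≤ C) :
    ConvolutionExists f h (ContinuousLinearMap.lsmul ℝ ℝ) := fun _ =>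
  (bddAbove_range_norm_of_abs_le hC).mono (Set.image_subset_range _ _)
    |>.convolutionExistsAt _ .univ (Set.subset_univ _) hf.integrableOn hh

lemma abs_convolution_le_integral_mul (hf : Integrable f) (hC : ∀ x, |h x| ≤ C) (x : ℝ) :
    |(f ⋆ h) x| ≤ (∫ t, |f t|) * C := by
  rw [← Real.norm_eq_abs, ← integral_mul_const]
  refine norm_integral_le_of_norm_le (hf.abs.mul_const C) (Eventually.of_forall fun t => ?_)
  simpa using mul_le_mul_of_nonneg_left (hC (x - t)) (abs_nonneg (f t))

lemma convolution_assoc_of_integrable_of_bounded (hf : Integrable f) (hg : Integrable g)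
    (hh : AEStronglyMeasurable h) (hC : ∀ x, |h x| ≤ C) : (f ⋆ g) ⋆ h = f ⋆ (g ⋆ h) := by
  have hbound (x : ℝ) : |‖h x‖| ≤ C := by simpa using hC x
  have hgh : ConvolutionExists (fun x => ‖g x‖) (fun x => ‖h x‖)
      (ContinuousLinearMap.mul ℝ ℝ) :=
    convolutionExists_of_integrable_of_bounded hg.norm hh.norm hbound
  have hgh_meas : AEStronglyMeasurable
      ((fun x => ‖g x‖) ⋆[ContinuousLinearMap.mul ℝ ℝ] fun x => ‖h x‖) := by
    exact (AEStronglyMeasurable.convolution_integrand _ hg.norm.aestronglyMeasurable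
      hh.norm).integral_prod_right'
  ext x
  exact convolution_assoc _ _ _ _ (fun a b c => by simp [mul_assoc]) hf.aestronglyMeasurable
    hg.aestronglyMeasurable hh (hf.ae_convolution_exists _ hg) (Eventually.of_forall hgh)
    (convolutionExists_of_integrable_of_bounded hf.norm hgh_meas
      (abs_convolution_le_integral_mul hg.norm hbound) x)

lemma abs_convolution_le {s : Set ℝ} (hs : volume s < ⊤) {B : ℝ}
    (hfs : ∀ᵐ x, x ∉ s → f x = 0) (hB : ∀ᵐ x, |f x| ≤ B) (hC : ∀ x, |h x| ≤ C) (x : ℝ) :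
    |(f ⋆ h) x| ≤ B * C * volume.real s := by
  have hrestrict : (f ⋆ h) x = ∫ t in s, f t * h (x - t) := by
    refine (setIntegral_eq_integral_of_ae_compl_eq_zero ?_).symm
    filter_upwards [hfs] with t ht hts
    simp [ht hts]
  rw [hrestrict, ← Real.norm_eq_abs]
  refine norm_setIntegral_le_of_norm_le_const_ae' hs ?_
  filter_upwards [hB] with t ht _
  rw [Real.norm_eq_abs, abs_mul]
  exact mul_le_mul ht (hC _) (abs_nonneg _) ((abs_nonneg _).trans ht)

lemma tendsto_convolution_atTop {l : ℝ} (hf : Integrable f) (hh : Measurable h)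
    (hC : ∀ x, |h x| ≤ C) (hl : Tendsto h atTop (𝓝 l)) :
    Tendsto (f ⋆ h) atTop (𝓝 ((∫ t, f t) * l)) := by
  rw [← integral_mul_const]
  refine tendsto_integral_filter_of_dominated_convergence (fun t => |f t| * C)
    (Eventually.of_forall fun x => ?_) (Eventually.of_forall fun x => ?_) (hf.abs.mul_const C)
    (Eventually.of_forall fun t => ?_)
  · exact hf.aestronglyMeasurable.mul
      (hh.comp (measurable_const.sub measurable_id)).aestronglyMeasurable
  · refine Eventually.of_forall fun t => ?_
    simpa using mul_le_mul_of_nonneg_left (hC (x - t)) (abs_nonneg (f t))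
  · exact (hl.comp (tendsto_atTop_add_const_right _ (-t) tendsto_id)).const_mul (f t)

end Convolution

section Averaging

variable {F G f h : ℝ → ℝ} {B C c : ℝ}

lemma intervalIntegrable_of_locallyIntegrable (hF : LocallyIntegrable F) (a b : ℝ) :
    IntervalIntegrable F volume a b :=
  (hF.integrableOn_isCompact isCompact_uIcc).intervalIntegrable

lemma aop_eq_integral_add (F : ℝ → ℝ) (x : ℝ) :
    Aop F x = ∫ s in (-(1 / 2) : ℝ)..(1 / 2), F (x + s) := by
  rw [intervalIntegral.integral_comp_add_left, ← sub_eq_add_neg, Aop]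

lemma aop_const (a x : ℝ) : Aop (fun _ => a) x = a := by
  rw [aop_eq_integral_add, intervalIntegral.integral_const, smul_eq_mul]
  norm_num

lemma aop_const_smul (a : ℝ) (F : ℝ → ℝ) : Aop (a • F) = a • Aop F :=
  funext fun _ => intervalIntegral.integral_const_mul a F

lemma aop_add (hF : LocallyIntegrable F) (hG : LocallyIntegrable G) :
    Aop (F + G) = Aop F + Aop G :=
  funext fun _ => intervalIntegral.integral_add (intervalIntegrable_of_locallyIntegrable hF _ _)
    (intervalIntegrable_of_locallyIntegrable hG _ _)

lemma aop_sub (hF : LocallyIntegrable F) (hG : LocallyIntegrable G) :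
    Aop (F - G) = Aop F - Aop G :=
  funext fun _ => intervalIntegral.integral_sub (intervalIntegrable_of_locallyIntegrable hF _ _)
    (intervalIntegrable_of_locallyIntegrable hG _ _)

lemma aop_eq_primitive_sub (hF : LocallyIntegrable F) :
    Aop F = fun x => (∫ s in (0 : ℝ)..(x + 1 / 2), F s) - ∫ s in (0 : ℝ)..(x - 1 / 2), F s :=
  funext fun _ => (intervalIntegral.integral_interval_sub_left
    (intervalIntegrable_of_locallyIntegrable hF _ _)
    (intervalIntegrable_of_locallyIntegrable hF _ _)).symm

lemma aop_eq_sub_of_hasDerivAt (hF : ∀ x, HasDerivAt F (f x) x) (hf : Continuous f) (x : ℝ) :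
    Aop f x = F (x + 1 / 2) - F (x - 1 / 2) :=
  intervalIntegral.integral_eq_sub_of_hasDerivAt (fun y _ => hF y) (hf.intervalIntegrable _ _)

lemma hasDerivAt_aop (hF : Continuous F) (x : ℝ) :
    HasDerivAt (Aop F) (F (x + 1 / 2) - F (x - 1 / 2)) x := by
  have hprim (y : ℝ) : HasDerivAt (fun y => ∫ s in (0 : ℝ)..y, F s) (F y) y :=
    hF.integral_hasStrictDerivAt 0 y |>.hasDerivAt
  rw [aop_eq_primitive_sub hF.locallyIntegrable]
  exact ((hprim _).comp_add_const x (1 / 2)).sub ((hprim _).comp_sub_const x (1 / 2))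

lemma continuous_aop (hF : LocallyIntegrable F) : Continuous (Aop F) := by
  have hprim := intervalIntegral.continuous_primitive (intervalIntegrable_of_locallyIntegrable hF) 0
  rw [aop_eq_primitive_sub hF]
  fun_prop

lemma abs_aop_le (hB : ∀ᵐ x, |F x| ≤ B) (x : ℝ) : |Aop F x| ≤ B := by
  have h := intervalIntegral.norm_integral_le_of_norm_le_const_ae (f := F) (a := x - 1 / 2)
    (b := x + 1 / 2) (hB.mono fun y hy _ => (Real.norm_eq_abs _).trans_le hy)
  rwa [show x + 1 / 2 - (x - 1 / 2) = 1 by ring, abs_one, mul_one] at h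

lemma lipschitzWith_aop (hF : LocallyIntegrable F) (hB : ∀ᵐ x, |F x| ≤ B) :
    LipschitzWith (2 * B).toNNReal (Aop F) := by
  refine LipschitzWith.of_dist_le' fun x y => ?_
  have hInt := intervalIntegrable_of_locallyIntegrable hF
  have hle (a b : ℝ) : |∫ s in a..b, F s| ≤ B * |b - a| :=
    intervalIntegral.norm_integral_le_of_norm_le_const_ae (f := F)
      (hB.mono fun s hs _ => (Real.norm_eq_abs _).trans_le hs)
  calc |Aop F x - Aop F y|
      = |(∫ s in (x - 1 / 2)..(y - 1 / 2), F s) - ∫ s in (x + 1 / 2)..(y + 1 / 2), F s| := by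
        rw [Aop, Aop, intervalIntegral.integral_interval_sub_interval_comm (hInt _ _) (hInt _ _)
          (hInt _ _)]
    _ ≤ B * |y - 1 / 2 - (x - 1 / 2)| + B * |y + 1 / 2 - (x + 1 / 2)| :=
        (abs_sub _ _).trans (add_le_add (hle _ _) (hle _ _))
    _ = 2 * B * |x - y| := by
        rw [sub_sub_sub_cancel_right, add_sub_add_right_eq_sub, abs_sub_comm y x]
        ring

lemma aop_eq_zero_of_notMem_Icc {R : ℝ} (hF : ∀ᵐ x, x ∉ Set.Icc (-R) R → F x = 0) {x : ℝ}
    (hx : x ∉ Set.Icc (-(R + 1 / 2)) (R + 1 / 2)) : Aop F x = 0 := by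
  refine intervalIntegral.integral_zero_ae ?_
  filter_upwards [hF] with s hs hmem
  rw [Set.uIoc_of_le (by linarith)] at hmem
  refine hs fun hsR => hx ⟨?_, ?_⟩ <;> linarith [hsR.1, hsR.2, hmem.1, hmem.2]

lemma tendsto_aop_atTop {l : ℝ} (hF : Continuous F) (hB : ∀ x, |F x| ≤ B)
    (hl : Tendsto F atTop (𝓝 l)) : Tendsto (Aop F) atTop (𝓝 l) := by
  have hlim : Tendsto (fun x => ∫ s in (-(1 / 2) : ℝ)..(1 / 2), F (x + s)) atTop
      (𝓝 (∫ _ in (-(1 / 2) : ℝ)..(1 / 2), l)) :=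
    intervalIntegral.tendsto_integral_filter_of_dominated_convergence (fun _ => B)
      (Eventually.of_forall fun x => (hF.comp (by fun_prop)).aestronglyMeasurable)
      (Eventually.of_forall fun x => Eventually.of_forall fun s _ => hB _)
      intervalIntegrable_const
      (Eventually.of_forall fun s _ => hl.comp (tendsto_atTop_add_const_right _ s tendsto_id))
  rw [← funext (aop_eq_integral_add F)] at hlim
  rwa [intervalIntegral.integral_const, sub_neg_eq_add, add_halves, one_smul] at hlim

lemma mop_eq (c : ℝ) (F : ℝ → ℝ) : Mop c F = Aop (Aop F) - c ^ 2 • F := rfl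

lemma mop_const (c a x : ℝ) : Mop c (fun _ => a) x = (1 - c ^ 2) * a := by
  rw [Mop, funext (aop_const a), aop_const]
  ring

lemma mop_const_smul (c a : ℝ) (F : ℝ → ℝ) : Mop c (a • F) = a • Mop c F := by
  rw [mop_eq, mop_eq, aop_const_smul, aop_const_smul, smul_sub, smul_comm]

lemma mop_sub (c : ℝ) (hF : LocallyIntegrable F) (hG : LocallyIntegrable G) :
    Mop c (F - G) = Mop c F - Mop c G := by
  rw [mop_eq, mop_eq, mop_eq, aop_sub hF hG, aop_sub (continuous_aop hF).locallyIntegrable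
    (continuous_aop hG).locallyIntegrable, smul_sub, sub_sub_sub_comm]

lemma mop_add (c : ℝ) (hF : LocallyIntegrable F) (hG : LocallyIntegrable G) :
    Mop c (F + G) = Mop c F + Mop c G := by
  rw [mop_eq, mop_eq, mop_eq, aop_add hF hG, aop_add (continuous_aop hF).locallyIntegrable
    (continuous_aop hG).locallyIntegrable, smul_add, add_sub_add_comm]

/-- The convolution kernel of `A`. -/
noncomputable def boxKernel : ℝ → ℝ := (Set.Ioc (-(1 / 2)) (1 / 2)).indicator 1

/-- The convolution kernel of `A²`. -/
def tentKernel (x : ℝ) : ℝ := max (1 - |x|) 0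

lemma boxKernel_convolution (F : ℝ → ℝ) : boxKernel ⋆ F = Aop F := by
  ext x
  have hind (t : ℝ) : boxKernel t • F (x - t) =
      (Set.Ioc (-(1 / 2)) (1 / 2)).indicator (fun t => F (x - t)) t := by
    unfold boxKernel Set.indicator
    split_ifs <;> simp
  rw [convolution_lsmul, funext hind, integral_indicator measurableSet_Ioc,
    ← intervalIntegral.integral_of_le (by norm_num), intervalIntegral.integral_comp_sub_left,
    sub_neg_eq_add, Aop]

lemma aop_boxKernel : Aop boxKernel = tentKernel := by
  ext x
  rw [Aop, intervalIntegral.integral_of_le (by linarith), boxKernel,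
    setIntegral_indicator measurableSet_Ioc, Set.Ioc_inter_Ioc]
  simp only [Pi.one_apply, setIntegral_const, smul_eq_mul, mul_one, measureReal_def,
    Real.volume_Ioc, ENNReal.toReal_ofReal', tentKernel]
  rcases le_total 0 x with hx | hx
  · rw [abs_of_nonneg hx, min_eq_right (by linarith), max_eq_left (a := x - 1 / 2) (by linarith)]
    ring_nf
  · rw [abs_of_nonpos hx, min_eq_left (by linarith), max_eq_right (a := x - 1 / 2) (by linarith)]
    ring_nf

lemma integrable_boxKernel : Integrable boxKernel :=
  (integrable_indicator_iff measurableSet_Ioc).mpr (integrableOn_const (by simp))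

lemma integrable_aop (hF : Integrable F) : Integrable (Aop F) :=
  boxKernel_convolution F ▸ integrable_boxKernel.integrable_convolution _ hF

lemma integrable_mop (hF : Integrable F) : Integrable (Mop c F) :=
  (integrable_aop (integrable_aop hF)).sub (hF.smul (c ^ 2))

lemma convolution_aop (hf : Integrable f) (hh : AEStronglyMeasurable h) (hC : ∀ x, |h x| ≤ C) :
    f ⋆ Aop h = Aop (f ⋆ h) := by
  rw [← boxKernel_convolution, ← boxKernel_convolution,
    ← convolution_assoc_of_integrable_of_bounded hf integrable_boxKernel hh hC,
    ← convolution_assoc_of_integrable_of_bounded integrable_boxKernel hf hh hC,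
    convolution_comm f boxKernel]

lemma aop_convolution (hf : Integrable f) (hh : AEStronglyMeasurable h) (hC : ∀ x, |h x| ≤ C) :
    Aop f ⋆ h = Aop (f ⋆ h) := by
  rw [← boxKernel_convolution, ← boxKernel_convolution,
    convolution_assoc_of_integrable_of_bounded integrable_boxKernel hf hh hC]

lemma continuous_convolution_of_bounded (hf : Integrable f) (hh : Continuous h)
    (hC : ∀ x, |h x| ≤ C) : Continuous (f ⋆ h) :=
  (bddAbove_range_norm_of_abs_le hC).continuous_convolution_right_of_integrable _ hf hh

lemma convolution_mop (hf : Integrable f) (hh : Continuous h) (hC : ∀ x, |h x| ≤ C) :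
    f ⋆ Mop c h = Mop c (f ⋆ h) := by
  have hA := continuous_aop hh.locallyIntegrable
  have hAC := abs_aop_le (Eventually.of_forall hC)
  have hA2C := abs_aop_le (Eventually.of_forall hAC)
  have hA2 := (continuous_aop hA.locallyIntegrable).aestronglyMeasurable (μ := volume)
  have hsmul := convolutionExists_of_integrable_of_bounded hf
    ((hh.const_smul (-c ^ 2)).aestronglyMeasurable) (C := |-c ^ 2| * C) fun x => by
      simpa [abs_mul] using mul_le_mul_of_nonneg_left (hC x) (sq_nonneg |c|)
  rw [mop_eq, mop_eq, sub_eq_add_neg, ← neg_smul,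
    (convolutionExists_of_integrable_of_bounded hf hA2 hA2C).distrib_add hsmul,
    convolution_smul, convolution_aop hf hA.aestronglyMeasurable hAC,
    convolution_aop hf hh.aestronglyMeasurable hC, neg_smul, ← sub_eq_add_neg]

lemma mop_convolution (hf : Integrable f) (hh : Continuous h) (hC : ∀ x, |h x| ≤ C) :
    Mop c f ⋆ h = Mop c (f ⋆ h) := by
  have hA2f := convolutionExists_of_integrable_of_bounded (integrable_aop (integrable_aop hf))
    hh.aestronglyMeasurable hC
  have hsmul := convolutionExists_of_integrable_of_bounded (hf.smul (-c ^ 2))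
    hh.aestronglyMeasurable hC
  rw [mop_eq, mop_eq, sub_eq_add_neg, ← neg_smul, hA2f.add_distrib hsmul, smul_convolution,
    aop_convolution (integrable_aop hf) hh.aestronglyMeasurable hC,
    aop_convolution hf hh.aestronglyMeasurable hC, neg_smul, ← sub_eq_add_neg]

lemma convolution_tentKernel (hf : Integrable f) : f ⋆ tentKernel = Aop (Aop f) := by
  have hbox (x : ℝ) : |boxKernel x| ≤ 1 := by
    unfold boxKernel Set.indicator
    split_ifs <;> simp
  rw [← aop_boxKernel, convolution_aop hf integrable_boxKernel.aestronglyMeasurable hbox,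
    convolution_comm, boxKernel_convolution]

end Averaging

/-- The second central difference of step one. -/
def secondDiff (f : ℝ → ℝ) (x : ℝ) : ℝ := f (x + 1) - 2 * f x + f (x - 1)

section CosTransform

/-- The cosine transform without normalising constant: for even `χ` it is the Fourier transform in
the angular frequency `x`. -/
noncomputable def cosTransform (χ : ℝ → ℝ) (x : ℝ) : ℝ := ∫ t, χ t * cos (t * x)

variable {χ χ₁ χ₂ : ℝ → ℝ}

lemma integrable_mul_cos (hχ : Integrable χ) (x : ℝ) : Integrable fun t => χ t * cos (t * x) :=
  hχ.mul_bdd (c := 1) (by fun_prop) (Eventually.of_forall fun _ => abs_cos_le_one _)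

lemma cosTransform_neg (χ : ℝ → ℝ) (x : ℝ) : cosTransform χ (-x) = cosTransform χ x := by
  simp only [cosTransform, mul_neg, cos_neg]

lemma cosTransform_const_mul (a : ℝ) (χ : ℝ → ℝ) :
    cosTransform (fun t => a * χ t) = fun x => a * cosTransform χ x := by
  ext x
  simp only [cosTransform, mul_assoc, integral_const_mul]

lemma cosTransform_sub (hχ₁ : Integrable χ₁) (hχ₂ : Integrable χ₂) :
    cosTransform (fun t => χ₁ t - χ₂ t) = fun x => cosTransform χ₁ x - cosTransform χ₂ x := by
  ext x
  simp only [cosTransform, sub_mul]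
  exact integral_sub (integrable_mul_cos hχ₁ x) (integrable_mul_cos hχ₂ x)

lemma abs_cosTransform_le (hχ : Integrable χ) (x : ℝ) : |cosTransform χ x| ≤ ∫ t, |χ t| := by
  refine norm_integral_le_of_norm_le (f := fun t => χ t * cos (t * x)) hχ.abs
    (Eventually.of_forall fun t => ?_)
  rw [norm_mul]
  exact mul_le_of_le_one_right (norm_nonneg _) (abs_cos_le_one _)

lemma cosTransform_eq_re_fourier (hχ : Integrable χ) (x : ℝ) :
    cosTransform χ x = (𝓕 (fun t => (χ t : ℂ)) (x / (2 * π))).re := by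
  have hInt : Integrable fun t : ℝ =>
      Complex.exp (↑(-2 * π * t * (x / (2 * π))) * Complex.I) • (χ t : ℂ) :=
    Integrable.bdd_mul (c := 1) hχ.ofReal (by fun_prop)
      (Eventually.of_forall fun t => (Complex.norm_exp_ofReal_mul_I _).le)
  rw [Real.fourier_real_eq_integral_exp_smul, ← RCLike.re_to_complex, ← integral_re hInt]
  refine integral_congr_ae (Eventually.of_forall fun t => ?_)
  have harg : -2 * π * t * (x / (2 * π)) = -(t * x) := by field_simp
  simp only [RCLike.re_to_complex, smul_eq_mul, Complex.re_mul_ofReal,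
    Complex.exp_ofReal_mul_I_re, harg, cos_neg]
  rw [mul_comm]

lemma continuous_cosTransform (hχ : Integrable χ) : Continuous (cosTransform χ) := by
  rw [funext (cosTransform_eq_re_fourier hχ)]
  have hfourier : Continuous (𝓕 fun t => (χ t : ℂ)) :=
    VectorFourier.fourierIntegral_continuous Real.continuous_fourierChar (by fun_prop) hχ.ofReal
  fun_prop

lemma tendsto_cosTransform_atTop (hχ : Integrable χ) : Tendsto (cosTransform χ) atTop (𝓝 0) := by
  rw [funext (cosTransform_eq_re_fourier hχ)]
  have hfourier : Tendsto (𝓕 fun t => (χ t : ℂ)) atTop (𝓝 0) :=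
    (Real.zero_at_infty_fourier _).mono_left atTop_le_cocompact
  exact (Complex.continuous_re.tendsto 0).comp
    (hfourier.comp (tendsto_id.atTop_div_const two_pi_pos))

lemma fourier_ofReal_of_even (hχ : Integrable χ) (heven : ∀ t, χ (-t) = χ t) :
    𝓕 (fun t => (χ t : ℂ)) = fun ξ => (cosTransform χ (2 * π * ξ) : ℂ) := by
  ext ξ
  have hconj : (starRingEnd ℂ) (𝓕 (fun t => (χ t : ℂ)) ξ) = 𝓕 (fun t => (χ t : ℂ)) ξ := by
    calc (starRingEnd ℂ) (𝓕 (fun t => (χ t : ℂ)) ξ) = 𝓕⁻ (fun t => (χ t : ℂ)) ξ := by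
          rw [Real.fourier_eq', Real.fourierInv_eq', ← integral_conj]
          simp [← Complex.exp_conj, Complex.conj_ofNat]
      _ = 𝓕 (fun t => (χ t : ℂ)) ξ := by
          rw [Real.fourierInv_eq_fourier_comp_neg]
          simp only [heven]
  rw [cosTransform_eq_re_fourier hχ, mul_div_cancel_left₀ _ two_pi_pos.ne',
    Complex.conj_eq_iff_re.mp hconj]

lemma cosTransform_comp_mul_left {r : ℝ} (hr : 0 < r) (χ : ℝ → ℝ) (x : ℝ) :
    cosTransform (fun t => χ (r * t)) (r * x) = r⁻¹ * cosTransform χ x := by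
  have h := Measure.integral_comp_mul_left (fun t => χ t * cos (t * x)) r
  rw [abs_of_pos (inv_pos.mpr hr), smul_eq_mul] at h
  rw [cosTransform, cosTransform, ← h]
  refine integral_congr_ae (Eventually.of_forall fun t => ?_)
  simp only
  ring_nf

theorem cosTransform_cosTransform (hcont : Continuous χ) (hχ : Integrable χ)
    (heven : ∀ t, χ (-t) = χ t) (hC : Integrable (cosTransform χ)) (x : ℝ) :
    cosTransform (cosTransform χ) x = 2 * π * χ x := by
  have hscaled : Integrable fun ξ => cosTransform χ (2 * π * ξ) :=
    hC.comp_mul_left' two_pi_pos.ne'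
  have hfourier := fourier_ofReal_of_even hχ heven
  have hinv : 𝓕⁻ (𝓕 fun t => (χ t : ℂ)) (-x) = χ (-x) := congrFun
    (Continuous.fourierInv_fourier_eq (by fun_prop) hχ.ofReal (hfourier ▸ hscaled.ofReal)) _
  rw [Real.fourierInv_eq_fourier_neg, neg_neg, hfourier,
    fourier_ofReal_of_even hscaled fun ξ => by rw [mul_neg, cosTransform_neg],
    Complex.ofReal_inj, cosTransform_comp_mul_left two_pi_pos, heven] at hinv
  rw [← hinv, mul_inv_cancel_left₀ two_pi_pos.ne']

lemma integrable_cosTransform (hsupp : HasCompactSupport χ) (hχ : ContDiff ℝ ∞ χ) :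
    Integrable (cosTransform χ) := by
  have hsupp' : HasCompactSupport fun t => (χ t : ℂ) :=
    hsupp.comp_left (g := ((↑) : ℝ → ℂ)) Complex.ofReal_zero
  have hχ' : ContDiff ℝ ∞ fun t => (χ t : ℂ) := Complex.ofRealCLM.contDiff.comp hχ
  have hfourier : Integrable (𝓕 fun t => (χ t : ℂ)) := by
    have h := (𝓕 (hsupp'.toSchwartzMap hχ')).integrable (μ := volume)
    rwa [SchwartzMap.fourier_coe] at h
  rw [funext (cosTransform_eq_re_fourier (hχ.continuous.integrable_of_hasCompactSupport hsupp))]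
  exact (hfourier.comp_div two_pi_pos.ne').re

lemma aop_cos (t x : ℝ) : Aop (fun y => cos (t * y)) x = symb t * cos (t * x) := by
  rcases eq_or_ne t 0 with rfl | ht
  · simp only [zero_mul, cos_zero, aop_const, symb_zero, one_mul]
  have hderiv (y : ℝ) : HasDerivAt (fun y => sin (t * y) / t) (cos (t * y)) y := by
    simpa [ht] using (((hasDerivAt_id y).const_mul t).sin).div_const t
  rw [aop_eq_sub_of_hasDerivAt hderiv (by fun_prop), ← sub_div,
    div_eq_iff ht, mul_right_comm, mul_comm (symb t), mul_symb, mul_add, mul_sub, sin_add, sin_sub,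
    show t * (1 / 2) = t / 2 by ring]
  ring

lemma aop_cosTransform (hχ : Integrable χ) :
    Aop (cosTransform χ) = cosTransform fun t => symb t * χ t := by
  ext x
  have hswap : Aop (cosTransform χ) x =
      ∫ t, ∫ s in (x - 1 / 2)..(x + 1 / 2), χ t * cos (t * s) := by
    refine intervalIntegral_integral_swap ?_
    have : IsFiniteMeasure (volume.restrict (Set.uIoc (x - 1 / 2) (x + 1 / 2))) :=
      ⟨by simp [Set.uIoc]⟩
    exact (hχ.comp_snd _).mul_bdd (c := 1) (by fun_prop)
      (Eventually.of_forall fun _ => abs_cos_le_one _)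
  rw [hswap]
  refine integral_congr_ae (Eventually.of_forall fun t => ?_)
  have hcos := aop_cos t x
  rw [Aop] at hcos
  simp only
  rw [intervalIntegral.integral_const_mul, hcos]
  ring

lemma integrable_symb_mul (hχ : Integrable χ) : Integrable fun t => symb t * χ t :=
  hχ.bdd_mul (c := 1) continuous_symb.aestronglyMeasurable (Eventually.of_forall abs_symb_le_one)

lemma aop_aop_cosTransform (hχ : Integrable χ) :
    Aop (Aop (cosTransform χ)) = cosTransform fun t => symb t ^ 2 * χ t := by
  rw [aop_cosTransform hχ, aop_cosTransform (integrable_symb_mul hχ)]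
  simp only [sq, mul_assoc]

lemma integrable_symb_sq_mul (hχ : Integrable χ) : Integrable fun t => symb t ^ 2 * χ t := by
  simpa only [sq, mul_assoc] using integrable_symb_mul (integrable_symb_mul hχ)

lemma integrable_msymb_mul (c : ℝ) (hχ : Integrable χ) : Integrable fun t => msymb c t * χ t := by
  simp only [msymb, sub_mul]
  exact (integrable_symb_sq_mul hχ).sub (hχ.const_mul _)

lemma mop_cosTransform (c : ℝ) (hχ : Integrable χ) :
    Mop c (cosTransform χ) = cosTransform fun t => msymb c t * χ t := by
  simp only [msymb, sub_mul]
  rw [cosTransform_sub (integrable_symb_sq_mul hχ) (hχ.const_mul _), cosTransform_const_mul,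
    ← aop_aop_cosTransform hχ]
  rfl

lemma secondDiff_cosTransform (hχ : Integrable χ) :
    secondDiff (cosTransform χ) = cosTransform fun t => -(t ^ 2 * symb t ^ 2 * χ t) := by
  ext x
  have hsub : Integrable fun t => χ t * cos (t * (x + 1)) - 2 * (χ t * cos (t * x)) :=
    (integrable_mul_cos hχ _).sub ((integrable_mul_cos hχ x).const_mul 2)
  simp only [secondDiff, cosTransform, ← integral_const_mul]
  rw [← integral_sub (integrable_mul_cos hχ _) ((integrable_mul_cos hχ x).const_mul 2),
    ← integral_add hsub (integrable_mul_cos hχ _)]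
  refine integral_congr_ae (Eventually.of_forall fun t => ?_)
  simp only [mul_add, mul_sub, mul_one, cos_add, cos_sub, sq_mul_symb_sq]
  ring

end CosTransform

section TentTransform

variable {f : ℝ → ℝ} {c k x : ℝ} {g : ℝ → ℝ}

lemma continuous_tentKernel : Continuous tentKernel := by
  unfold tentKernel
  fun_prop

lemma tentKernel_neg (x : ℝ) : tentKernel (-x) = tentKernel x := by
  rw [tentKernel, abs_neg, tentKernel]

lemma tentKernel_of_abs_le_one (hx : |x| ≤ 1) : tentKernel x = 1 - |x| :=
  max_eq_left (sub_nonneg.mpr hx)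

lemma tentKernel_of_one_le_abs (hx : 1 ≤ |x|) : tentKernel x = 0 :=
  max_eq_right (sub_nonpos.mpr hx)

lemma integrable_comp_tentKernel (hf : Continuous f) (h0 : f 0 = 0) :
    Integrable (f ∘ tentKernel) := by
  refine (hf.comp continuous_tentKernel).integrable_of_hasCompactSupport
    (HasCompactSupport.intro (isCompact_Icc (a := -1) (b := 1)) fun x hx => ?_)
  rw [Set.mem_Icc, ← abs_le, not_le] at hx
  rw [Function.comp_apply, tentKernel_of_one_le_abs hx.le, h0]

lemma cosTransform_comp_tentKernel (h0 : f 0 = 0) (x : ℝ) :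
    cosTransform (f ∘ tentKernel) x = 2 * ∫ u in (0 : ℝ)..1, f (1 - u) * cos (u * x) := by
  have habs (t : ℝ) : (f ∘ tentKernel) t * cos (t * x) =
      f (max (1 - |t|) 0) * cos (|t| * x) := by
    rcases abs_choice t with h | h <;> simp [tentKernel, h]
  have hvanish : ∀ u ∈ Set.Ioi (0 : ℝ) \ Set.Ioc 0 1, f (max (1 - u) 0) * cos (u * x) = 0 := by
    rintro u ⟨hu, hu'⟩
    have hu1 : 1 < u := not_le.mp fun h => hu' ⟨hu, h⟩
    rw [max_eq_right (by linarith), h0, zero_mul]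
  rw [cosTransform, funext habs, integral_comp_abs (f := fun u => f (max (1 - u) 0) * cos (u * x)),
    setIntegral_eq_of_subset_of_forall_sdiff_eq_zero measurableSet_Ioi Set.Ioc_subset_Ioi_self
      hvanish, intervalIntegral.integral_of_le zero_le_one]
  congr 1
  refine setIntegral_congr_fun measurableSet_Ioc fun u hu => ?_
  simp only [max_eq_left (sub_nonneg.mpr hu.2)]

lemma cosTransform_tentKernel (x : ℝ) : cosTransform tentKernel x = symb x ^ 2 := by
  have hInt := cosTransform_comp_tentKernel (f := id) rfl x
  simp only [Function.id_comp, id] at hInt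
  rcases eq_or_ne x 0 with rfl | hx
  · rw [hInt, symb_zero]
    simp only [mul_zero, cos_zero, mul_one]
    rw [intervalIntegral.integral_sub (by simp) (by simp), integral_id]
    norm_num
  have hderiv (u : ℝ) : HasDerivAt (fun u => (1 - u) * (sin (u * x) / x) - cos (u * x) / x ^ 2)
      ((1 - u) * cos (u * x)) u := by
    have harg := (hasDerivAt_id u).mul_const x
    refine ((((hasDerivAt_id u).const_sub 1).mul (harg.sin.div_const x)).sub
      (harg.cos.div_const (x ^ 2))).congr_deriv ?_
    simp only [id]
    field_simp
    ring
  rw [hInt, intervalIntegral.integral_eq_sub_of_hasDerivAt (fun u _ => hderiv u)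
    (Continuous.intervalIntegrable (by fun_prop) _ _), ← mul_right_inj' (pow_ne_zero 2 hx),
    sq_mul_symb_sq]
  simp only [sub_self, zero_mul, sin_zero, cos_zero, one_mul]
  field_simp
  ring

lemma sq_sub_sq_mul_cosTransform_sin_tentKernel (k x : ℝ) :
    (k ^ 2 - x ^ 2) * cosTransform ((fun y => sin (k * y)) ∘ tentKernel) x =
      2 * k * (cos x - cos k) := by
  have hderiv (u : ℝ) : HasDerivAt
      (fun u => k * (cos (k * (1 - u)) * cos (u * x)) - x * (sin (k * (1 - u)) * sin (u * x)))
      ((k ^ 2 - x ^ 2) * (sin (k * (1 - u)) * cos (u * x))) u := by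
    have harg := (hasDerivAt_id u).mul_const x
    have harg' := ((hasDerivAt_id u).const_sub 1).const_mul k
    refine (((harg'.cos.mul harg.cos).const_mul k).sub
      ((harg'.sin.mul harg.sin).const_mul x)).congr_deriv ?_
    simp only [id]
    ring
  rw [cosTransform_comp_tentKernel (by simp), mul_left_comm,
    ← intervalIntegral.integral_const_mul,
    intervalIntegral.integral_eq_sub_of_hasDerivAt (fun u _ => hderiv u)
      (Continuous.intervalIntegrable (by fun_prop) _ _)]
  simp
  ring

/-- The odd solution of `p'' = -sin (k y)` with `p' 0 = 0`. Composed with the tent it is the image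
under `M` of a sine of resonant frequency `k` cut off to a half-line. -/
noncomputable def resonanceProfile (k y : ℝ) : ℝ := sin (k * y) / k ^ 2 - y / k

lemma resonanceProfile_zero (k : ℝ) : resonanceProfile k 0 = 0 := by
  simp [resonanceProfile]

lemma continuous_resonanceProfile (k : ℝ) : Continuous (resonanceProfile k) := by
  unfold resonanceProfile
  fun_prop

lemma continuous_cosTransform_resonanceProfile (k : ℝ) :
    Continuous (cosTransform (resonanceProfile k ∘ tentKernel)) :=
  continuous_cosTransform (integrable_comp_tentKernel (continuous_resonanceProfile k)
    (resonanceProfile_zero k))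

lemma cosTransform_resonanceProfile (k x : ℝ) :
    cosTransform (resonanceProfile k ∘ tentKernel) x =
      (k ^ 2)⁻¹ * cosTransform ((fun y => sin (k * y)) ∘ tentKernel) x - k⁻¹ * symb x ^ 2 := by
  have hsin : Integrable ((fun y => sin (k * y)) ∘ tentKernel) :=
    integrable_comp_tentKernel (by fun_prop) (by simp)
  have htent : Integrable tentKernel := integrable_comp_tentKernel continuous_id rfl
  have hprofile : resonanceProfile k ∘ tentKernel = fun t =>
      (k ^ 2)⁻¹ * ((fun y => sin (k * y)) ∘ tentKernel) t - k⁻¹ * tentKernel t := by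
    ext t
    simp only [Function.comp_apply, resonanceProfile]
    ring
  rw [hprofile, cosTransform_sub (hsin.const_mul _) (htent.const_mul _), cosTransform_const_mul,
    cosTransform_const_mul]
  simp only [cosTransform_tentKernel]

namespace IsCofactor

lemma cosTransform_resonanceProfile (hg : IsCofactor c k g) (hk : k ≠ 0) (x : ℝ) :
    cosTransform (resonanceProfile k ∘ tentKernel) x = k * g x := by
  have hoff : Set.EqOn (cosTransform (resonanceProfile k ∘ tentKernel)) (fun x => k * g x)
      {k, -k}ᶜ := by
    intro x hx
    have hx : k ^ 2 - x ^ 2 ≠ 0 := by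
      rw [sub_ne_zero, ne_comm, Ne, sq_eq_sq_iff_eq_or_eq_neg]
      exact hx
    have hsin := sq_sub_sq_mul_cosTransform_sin_tentKernel k x
    have hsymb := sq_mul_symb_sq x
    have hspeed := hg.sq_mul_sq_eq
    have hm := hg.msymb_eq x
    rw [msymb] at hm
    refine mul_left_cancel₀ (mul_ne_zero (pow_ne_zero 2 hk) hx) ?_
    rw [_root_.cosTransform_resonanceProfile, mul_sub,
      mul_mul_mul_comm, mul_inv_cancel₀ (pow_ne_zero 2 hk), one_mul, hsin]
    linear_combination (k * hsymb - k * hspeed - k ^ 3 * hm) -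
      (k ^ 2 - x ^ 2) * symb x ^ 2 * k * mul_inv_cancel₀ hk
  exact congrFun (Continuous.ext_on
    (Set.toFinite _ |>.countable.dense_compl ℝ) (continuous_cosTransform_resonanceProfile k)
    (hg.continuous.const_mul k) hoff) x

lemma even (hg : IsCofactor c k g) (hk : k ≠ 0) (x : ℝ) : g (-x) = g x :=
  mul_left_cancel₀ hk <| by
    rw [← hg.cosTransform_resonanceProfile hk, ← hg.cosTransform_resonanceProfile hk,
      cosTransform_neg]

end IsCofactor

end TentTransform

section HalfSine

variable {F f q : ℝ → ℝ} {c k x : ℝ}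

lemma hasDerivAt_comp_min_zero (hF : ∀ x, HasDerivAt F (f x) x) (h0 : f 0 = 0) (x : ℝ) :
    HasDerivAt (fun x => F (min x 0)) (f (min x 0)) x := by
  rcases lt_trichotomy x 0 with hx | rfl | hx
  · rw [min_eq_left hx.le]
    refine (hF x).congr_of_eventuallyEq ?_
    filter_upwards [Iio_mem_nhds hx] with y hy
    rw [min_eq_left (le_of_lt hy)]
  · have hleft : HasDerivWithinAt (fun x => F (min x 0)) 0 (Set.Iic 0) 0 :=
      (h0 ▸ (hF 0).hasDerivWithinAt).congr (fun y hy => by rw [min_eq_left hy]) (by simp)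
    have hright : HasDerivWithinAt (fun x => F (min x 0)) 0 (Set.Ici 0) 0 :=
      (hasDerivWithinAt_const _ _ (F 0)).congr (fun y hy => by rw [min_eq_right hy]) (by simp)
    rw [min_self, h0, ← hasDerivWithinAt_univ, ← Set.Iic_union_Ici (a := (0 : ℝ))]
    exact hleft.union hright
  · rw [min_eq_right hx.le, h0]
    refine (hasDerivAt_const x (F 0)).congr_of_eventuallyEq ?_
    filter_upwards [Ioi_mem_nhds hx] with y hy
    rw [min_eq_right (le_of_lt hy)]

lemma aop_aop_eq_secondDiff (hF : ∀ x, HasDerivAt F (f x) x) (hf : ∀ x, HasDerivAt f (q x) x)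
    (hq : Continuous q) : Aop (Aop q) = secondDiff F := by
  have hcont : Continuous f := continuous_iff_continuousAt.mpr fun x => (hf x).continuousAt
  have hdiff (x : ℝ) : HasDerivAt (fun x => F (x + 1 / 2) - F (x - 1 / 2))
      (f (x + 1 / 2) - f (x - 1 / 2)) x :=
    ((hF _).comp_add_const x (1 / 2)).sub ((hF _).comp_sub_const x (1 / 2))
  ext x
  rw [funext (aop_eq_sub_of_hasDerivAt hf hq), aop_eq_sub_of_hasDerivAt hdiff (by fun_prop),
    secondDiff]
  ring_nf

lemma hasDerivAt_resonanceProfile (hk : k ≠ 0) (y : ℝ) :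
    HasDerivAt (resonanceProfile k) ((cos (k * y) - 1) / k) y := by
  refine ((((hasDerivAt_id y).const_mul k).sin.div_const (k ^ 2)).sub
    ((hasDerivAt_id y).div_const k)).congr_deriv ?_
  simp only [id]
  field_simp

lemma hasDerivAt_deriv_resonanceProfile (hk : k ≠ 0) (y : ℝ) :
    HasDerivAt (fun y => (cos (k * y) - 1) / k) (-sin (k * y)) y := by
  refine (((((hasDerivAt_id y).const_mul k).cos).sub_const 1).div_const k).congr_deriv ?_
  simp only [id]
  field_simp

/-- The sine of frequency `k` on the negative half-line, extended by zero. -/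
noncomputable def halfSine (k x : ℝ) : ℝ := sin (k * min x 0)

lemma continuous_halfSine (k : ℝ) : Continuous (halfSine k) := by
  unfold halfSine
  fun_prop

lemma aop_aop_halfSine (hk : k ≠ 0) (x : ℝ) :
    Aop (Aop (halfSine k)) x = -secondDiff (fun y => resonanceProfile k (min y 0)) x := by
  have hneg : Aop (Aop (halfSine k)) = secondDiff fun y => -resonanceProfile k (min y 0) :=
    aop_aop_eq_secondDiff
      (fun y => (hasDerivAt_comp_min_zero (hasDerivAt_resonanceProfile hk) (by simp) y).neg)
      (fun y => (hasDerivAt_comp_min_zero (hasDerivAt_deriv_resonanceProfile hk) (by simp)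
        y).neg.congr_deriv (neg_neg _))
      (continuous_halfSine k)
  rw [hneg, secondDiff, secondDiff]
  ring

lemma resonanceProfile_neg (k y : ℝ) : resonanceProfile k (-y) = -resonanceProfile k y := by
  simp only [resonanceProfile, mul_neg, sin_neg]
  ring

lemma secondDiff_resonanceProfile (hk : k ≠ 0) (hc : k ^ 2 * c ^ 2 = 2 * (1 - cos k)) (x : ℝ) :
    secondDiff (resonanceProfile k) x = -(c ^ 2 * sin (k * x)) := by
  simp only [secondDiff, resonanceProfile, mul_add, mul_sub, mul_one, sin_add, sin_sub]
  field_simp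
  linear_combination sin (k * x) * hc

lemma mop_halfSine (hk : k ≠ 0) (hc : k ^ 2 * c ^ 2 = 2 * (1 - cos k)) :
    Mop c (halfSine k) = resonanceProfile k ∘ tentKernel := by
  ext x
  have hdiff := secondDiff_resonanceProfile hk hc x
  rw [Mop, aop_aop_halfSine hk, Function.comp_apply]
  simp only [halfSine, secondDiff] at hdiff ⊢
  rcases le_total x 0 with hx | hx <;> rcases le_total |x| 1 with hx1 | hx1
  · rw [tentKernel_of_abs_le_one hx1]
    rw [abs_of_nonpos hx] at hx1 ⊢
    rw [min_eq_right (by linarith : 0 ≤ x + 1), min_eq_left hx,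
      min_eq_left (by linarith : x - 1 ≤ 0), resonanceProfile_zero, sub_neg_eq_add, add_comm 1 x]
    linear_combination -hdiff
  · rw [tentKernel_of_one_le_abs hx1, resonanceProfile_zero]
    rw [abs_of_nonpos hx] at hx1
    rw [min_eq_left (by linarith : x + 1 ≤ 0), min_eq_left hx,
      min_eq_left (by linarith : x - 1 ≤ 0), hdiff, neg_neg, sub_self]
  · rw [tentKernel_of_abs_le_one hx1]
    rw [abs_of_nonneg hx] at hx1 ⊢
    rw [min_eq_right (by linarith : 0 ≤ x + 1), min_eq_right hx,
      min_eq_left (by linarith : x - 1 ≤ 0), ← neg_sub x 1, resonanceProfile_neg,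
      resonanceProfile_zero, mul_zero, mul_zero, sin_zero]
    ring
  · rw [tentKernel_of_one_le_abs hx1, resonanceProfile_zero]
    rw [abs_of_nonneg hx] at hx1
    simp [min_eq_right (by linarith : 0 ≤ x + 1), min_eq_right hx,
      min_eq_right (by linarith : 0 ≤ x - 1), resonanceProfile_zero]

end HalfSine

section DecayingKernel

variable {c k K : ℝ} {g κ : ℝ → ℝ}

/-- A fundamental solution of `M S = A² G` selected by its decay at `+∞`: since `tentKernel` is
the kernel of `A²`, the convolution `G ⋆ κ` is the solution that tends to zero there. -/
structure IsDecayingKernel (c K : ℝ) (κ : ℝ → ℝ) : Prop where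
  continuous : Continuous κ
  abs_le : ∀ x, |κ x| ≤ K
  tendsto : Tendsto κ atTop (𝓝 0)
  mop_eq : Mop c κ = tentKernel

lemma IsCofactor.exists_integrable_msymb_mul_eq (hg : IsCofactor c k g) (hc : c ≠ 0) (hk : k ≠ 0) :
    ∃ (β : ℝ) (ψ : ℝ → ℝ), Integrable ψ ∧
      ∀ x, msymb c x * ψ x = symb x ^ 2 - β * (k * g x) := by
  set β := c ^ 2 / (k * g k)
  have hβ : c ^ 2 = β * (k * g k) := (div_mul_cancel₀ _ (mul_ne_zero hk (hg.ne_zero k))).symm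
  set N : ℝ → ℝ := fun x => symb x ^ 2 - β * (k * g x) with hN
  have hN_analytic (x : ℝ) : AnalyticAt ℝ N x :=
    ((analyticAt_symb x).pow 2).sub
      (analyticAt_const.mul (analyticAt_const.mul (hg.analyticAt x)))
  have hN_pos : N k = 0 := by simp only [hN, hg.symb_sq_eq, hβ, sub_self]
  have hN_neg : N (-k) = 0 := by
    simpa only [hN, symb_neg, hg.even hk] using hN_pos
  have hN_bigO : N =O[cocompact ℝ] fun x => (1 + x ^ 2)⁻¹ :=
    isBigO_symb_sq.sub ((hg.isBigO.const_mul_left k).const_mul_left β)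
  obtain ⟨q, hq, hNq⟩ := exists_analyticAt_eq_sq_sub_sq_mul hN_analytic hk hN_pos hN_neg
  have hprod (x : ℝ) : msymb c x * (q x / g x) = N x := by
    rw [hg.msymb_eq, hNq, mul_assoc, mul_div_cancel₀ _ (hg.ne_zero x)]
  have hquot : (fun x => q x / g x) =ᶠ[cocompact ℝ] fun x => N x * (msymb c x)⁻¹ := by
    filter_upwards [tendsto_sq_cocompact.eventually_gt_atTop (k ^ 2)] with x hx
    have hm : msymb c x ≠ 0 :=
      hg.msymb_eq x ▸ mul_ne_zero (sub_ne_zero.mpr hx.ne') (hg.ne_zero x)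
    rw [← hprod, mul_comm (msymb c x), mul_inv_cancel_right₀ hm]
  refine ⟨β, fun x => q x / g x, integrable_of_isBigO_inv_one_add_sq ?_ ?_, hprod⟩
  · exact continuous_iff_continuousAt.mpr fun x =>
      (hq x).continuousAt.div (hg.analyticAt x).continuousAt (hg.ne_zero x)
  · simpa only [mul_one] using
      hquot.trans_isBigO (hN_bigO.mul (isBigO_inv_msymb_one hc))

lemma IsCofactor.cosTransform_symb_sq_sub (hg : IsCofactor c k g) (hk : k ≠ 0) (β x : ℝ) :
    cosTransform (fun t => symb t ^ 2 - β * (k * g t)) x =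
      2 * π * (tentKernel x - β * resonanceProfile k (tentKernel x)) := by
  have htent : Integrable tentKernel := integrable_comp_tentKernel continuous_id rfl
  have hprofile := integrable_comp_tentKernel (continuous_resonanceProfile k)
    (resonanceProfile_zero k)
  set χ : ℝ → ℝ := fun t => tentKernel t - β * (resonanceProfile k ∘ tentKernel) t
  have hχ : Integrable χ := htent.sub (hprofile.const_mul β)
  have hcont : Continuous χ := continuous_tentKernel.sub
    (((continuous_resonanceProfile k).comp continuous_tentKernel).const_mul β)
  have hCχ : cosTransform χ = fun t => symb t ^ 2 - β * (k * g t) := by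
    rw [cosTransform_sub htent (hprofile.const_mul β), cosTransform_const_mul]
    simp only [cosTransform_tentKernel, hg.cosTransform_resonanceProfile hk]
  have heven (t : ℝ) : χ (-t) = χ t := by simp only [χ, Function.comp_apply, tentKernel_neg]
  rw [← hCχ, cosTransform_cosTransform hcont hχ heven]
  · rfl
  · exact hCχ ▸ integrable_symb_sq.sub ((hg.integrable.const_mul k).const_mul β)

-- Inverting the symbol on the part `ψ` of the transform of the tent that is regular at `±k`
-- leaves a multiple of `resonanceProfile k ∘ tentKernel`, which the half-line sine accounts for.
theorem IsCofactor.exists_isDecayingKernel (hg : IsCofactor c k g) (hc : c ≠ 0) (hk : k ≠ 0) :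
    ∃ K κ, IsDecayingKernel c K κ := by
  obtain ⟨β, ψ, hψ, hmψ⟩ := hg.exists_integrable_msymb_mul_eq hc hk
  have hC := continuous_cosTransform hψ
  have hregular : Mop c ((2 * π)⁻¹ • cosTransform ψ) =
      tentKernel - β • (resonanceProfile k ∘ tentKernel) := by
    ext x
    rw [mop_const_smul, Pi.smul_apply, mop_cosTransform c hψ, funext hmψ,
      hg.cosTransform_symb_sq_sub hk, smul_eq_mul, inv_mul_cancel_left₀ two_pi_pos.ne']
    rfl
  have hresonant : Mop c (β • halfSine k) = β • (resonanceProfile k ∘ tentKernel) := by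
    rw [mop_const_smul, mop_halfSine hk hg.sq_mul_sq_eq]
  refine ⟨|(2 * π)⁻¹| * (∫ t, |ψ t|) + |β|, (2 * π)⁻¹ • cosTransform ψ + β • halfSine k,
    (hC.const_smul _).add ((continuous_halfSine k).const_smul β), fun x => ?_, ?_, ?_⟩
  · refine (abs_add_le _ _).trans (add_le_add ?_ ?_)
    · rw [Pi.smul_apply, smul_eq_mul, abs_mul]
      exact mul_le_mul_of_nonneg_left (abs_cosTransform_le hψ x) (abs_nonneg _)
    · rw [Pi.smul_apply, smul_eq_mul, abs_mul]
      exact mul_le_of_le_one_right (abs_nonneg _) (abs_sin_le_one _)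
  · have hzero : Tendsto (halfSine k) atTop (𝓝 0) := by
      refine tendsto_const_nhds.congr' ?_
      filter_upwards [eventually_ge_atTop 0] with x hx
      simp [halfSine, min_eq_right hx]
    have hsum := ((tendsto_cosTransform_atTop hψ).const_smul (2 * π)⁻¹).add (hzero.const_smul β)
    rwa [smul_zero, smul_zero, add_zero] at hsum
  · rw [mop_add c (hC.const_smul _).locallyIntegrable
      ((continuous_halfSine k).const_smul β).locallyIntegrable, hregular, hresonant,
      sub_add_cancel]

end DecayingKernel

section Existence

variable {c K R B : ℝ} {κ F G : ℝ → ℝ}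

lemma exists_ae_abs_le_of_memLp_top (hG : MemLp G ⊤) : ∃ B, ∀ᵐ x, |G x| ≤ B := by
  refine ⟨(eLpNorm G ⊤ volume).toReal, ?_⟩
  filter_upwards [ae_le_eLpNormEssSup (f := G) (μ := volume)] with x hx
  rw [← eLpNorm_exponent_top] at hx
  simpa using ENNReal.toReal_mono hG.eLpNorm_ne_top hx

lemma integrable_of_memLp_top_of_ae_eq_zero {s : Set ℝ} (hs : volume s < ⊤) (hG : MemLp G ⊤)
    (h0 : ∀ᵐ x, x ∉ s → G x = 0) : Integrable G := by
  obtain ⟨B, hB⟩ := exists_ae_abs_le_of_memLp_top hG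
  have hon : IntegrableOn G s := Measure.integrableOn_of_bounded hs.ne hG.aestronglyMeasurable
    (ae_restrict_of_ae hB)
  exact integrableOn_univ.mp (hon.of_ae_sdiff_eq_zero nullMeasurableSet_univ
    (h0.mono fun x hx hxs => hx hxs.2))

/-- The operator `F ↦ F ⋆ κ - F`. It commutes with `A`, and for a decaying kernel `κ` it maps
`A² G` to `c²` times the solution `G ⋆ κ`, which is thereby two averages smoother than `G`. -/
noncomputable def defect (κ F : ℝ → ℝ) : ℝ → ℝ := F ⋆ κ - F

/-- A bound for `defect` in the supremum norm, on functions vanishing outside `[-(R+1), R+1]`. -/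
noncomputable def defectBound (K R : ℝ) : ℝ := K * volume.real (Set.Icc (-(R + 1)) (R + 1)) + 1

/-- The constant in the estimates of the normalised solution: `4 / c²` defects enter its second
derivative, and normalisation adds the factor `|1 - c²|` in the constant `η`. -/
noncomputable def solutionBound (c K R : ℝ) : ℝ := (4 + |1 - c ^ 2|) * (defectBound K R / c ^ 2)

lemma abs_defect_le (hK : ∀ x, |κ x| ≤ K)
    (hF : ∀ᵐ x, x ∉ Set.Icc (-(R + 1)) (R + 1) → F x = 0) (hB : ∀ᵐ x, |F x| ≤ B) {x : ℝ}
    (hx : |F x| ≤ B) : |defect κ F x| ≤ defectBound K R * B := by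
  refine (abs_sub _ _).trans ?_
  rw [defectBound, add_mul, one_mul, mul_right_comm, mul_comm K]
  exact add_le_add (abs_convolution_le measure_Icc_lt_top hF hB hK x) hx

lemma aop_defect (hF : Integrable F) (hκ : Continuous κ) (hK : ∀ x, |κ x| ≤ K) :
    Aop (defect κ F) = defect κ (Aop F) := by
  rw [defect, aop_sub (continuous_convolution_of_bounded hF hκ hK).locallyIntegrable
    hF.locallyIntegrable, ← aop_convolution hF hκ.aestronglyMeasurable hK, defect]

lemma exists_linearMap_eq_convolution (hκ : Continuous κ) (hK : ∀ x, |κ x| ≤ K) :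
    ∃ T : (ℝ → ℝ) →ₗ[ℝ] (ℝ → ℝ), ∀ G, Integrable G → T G = G ⋆ κ := by
  let I : Submodule ℝ (ℝ → ℝ) :=
    { carrier := {G | Integrable G volume}
      zero_mem' := integrable_zero _ _ _
      add_mem' := fun hG hH => Integrable.add hG hH
      smul_mem' := fun a _ hG => Integrable.smul a hG }
  have hexists {G : ℝ → ℝ} (hG : G ∈ I) :=
    convolutionExists_of_integrable_of_bounded hG hκ.aestronglyMeasurable hK
  let T₀ : I →ₗ[ℝ] (ℝ → ℝ) :=
    { toFun := fun G => (G : ℝ → ℝ) ⋆ κ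
      map_add' := fun G H => (hexists G.2).add_distrib (hexists H.2)
      map_smul' := fun a G => smul_convolution }
  obtain ⟨T, hT⟩ := T₀.exists_extend
  exact ⟨T, fun G hG => LinearMap.congr_fun hT ⟨G, hG⟩⟩

/-- Subtraction of a constant so that the function vanishes at `0`, paired with the constant by
which the image under `M` changes. -/
noncomputable def normalizeAtZero (c : ℝ) : (ℝ → ℝ) →ₗ[ℝ] (ℝ → ℝ) × ℝ where
  toFun S := (S - fun _ => S 0, -(1 - c ^ 2) * S 0)
  map_add' S T := Prod.ext (add_sub_add_comm S T _ _) (mul_add _ _ _)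
  map_smul' a S := Prod.ext (smul_sub a S _).symm (mul_left_comm _ _ _)

lemma normalizeAtZero_apply (c : ℝ) (S : ℝ → ℝ) :
    normalizeAtZero c S = (S - fun _ => S 0, -(1 - c ^ 2) * S 0) := rfl

lemma mop_normalizeAtZero (hF : Continuous F) (x : ℝ) :
    Mop c (normalizeAtZero c F).1 x = Mop c F x + (normalizeAtZero c F).2 := by
  rw [normalizeAtZero_apply, mop_sub c hF.locallyIntegrable continuous_const.locallyIntegrable,
    Pi.sub_apply, mop_const]
  ring

lemma deriv_normalizeAtZero (c : ℝ) (F : ℝ → ℝ) : deriv (normalizeAtZero c F).1 = deriv F :=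
  funext fun _ => deriv_sub_const (f := F) (F 0)

lemma abs_normalizeAtZero_fst_le (c : ℝ) (hB : ∀ x, |F x| ≤ B) (x : ℝ) :
    |(normalizeAtZero c F).1 x| ≤ 2 * B :=
  two_mul B ▸ (abs_sub _ _).trans (add_le_add (hB x) (hB 0))

lemma abs_normalizeAtZero_snd_le (c : ℝ) (hB : ∀ x, |F x| ≤ B) :
    |(normalizeAtZero c F).2| ≤ |1 - c ^ 2| * B := by
  rw [normalizeAtZero_apply, abs_mul, abs_neg]
  exact mul_le_mul_of_nonneg_left (hB 0) (abs_nonneg _)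

namespace IsDecayingKernel

variable (hκ : IsDecayingKernel c K κ)
include hκ

lemma one_le_defectBound (R : ℝ) : 1 ≤ defectBound K R :=
  le_add_of_nonneg_left (mul_nonneg ((abs_nonneg _).trans (hκ.abs_le 0)) measureReal_nonneg)

lemma continuous_convolution (hG : Integrable G) : Continuous (G ⋆ κ) :=
  continuous_convolution_of_bounded hG hκ.continuous hκ.abs_le

lemma mop_convolution (hG : Integrable G) : Mop c (G ⋆ κ) = Aop (Aop G) := by
  rw [← convolution_mop hG hκ.continuous hκ.abs_le, hκ.mop_eq, convolution_tentKernel hG]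

lemma tendsto_convolution (hG : Integrable G) : Tendsto (G ⋆ κ) atTop (𝓝 0) := by
  simpa using
    tendsto_convolution_atTop hG hκ.continuous.measurable hκ.abs_le hκ.tendsto

lemma convolution_eq (hG : Integrable G) (hc : c ≠ 0) :
    G ⋆ κ = fun x => Aop (defect κ (Aop G)) x / c ^ 2 := by
  have hκm := hκ.continuous.aestronglyMeasurable (μ := volume)
  ext x
  have hM : Aop (Aop (G ⋆ κ)) x - c ^ 2 * (G ⋆ κ) x = Aop (Aop G) x :=
    congrFun (hκ.mop_convolution hG) x
  rw [aop_defect (integrable_aop hG) hκ.continuous hκ.abs_le, defect, Pi.sub_apply,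
    aop_convolution (integrable_aop hG) hκm hκ.abs_le, aop_convolution hG hκm hκ.abs_le, ← hM]
  field_simp
  ring

lemma hasDerivAt_convolution (hG : Integrable G) (hc : c ≠ 0) (x : ℝ) :
    HasDerivAt (G ⋆ κ)
      ((defect κ (Aop G) (x + 1 / 2) - defect κ (Aop G) (x - 1 / 2)) / c ^ 2) x := by
  have hcont : Continuous (defect κ (Aop G)) :=
    (hκ.continuous_convolution (integrable_aop hG)).sub (continuous_aop hG.locallyIntegrable)
  rw [hκ.convolution_eq hG hc]
  exact (hasDerivAt_aop hcont x).div_const _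

lemma abs_convolution_le (hG : Integrable G) (hc : c ≠ 0)
    (h0 : ∀ᵐ x, x ∉ Set.Icc (-R) R → G x = 0) (hB : ∀ x, |Aop (Aop G) x| ≤ B) (x : ℝ) :
    |(G ⋆ κ) x| ≤ defectBound K R / c ^ 2 * B := by
  have hsupp (x : ℝ) (hx : x ∉ Set.Icc (-(R + 1)) (R + 1)) : Aop (Aop G) x = 0 := by
    refine aop_eq_zero_of_notMem_Icc
      (Eventually.of_forall fun _ => aop_eq_zero_of_notMem_Icc h0) ?_
    rwa [add_assoc, add_halves]
  rw [hκ.convolution_eq hG hc, aop_defect (integrable_aop hG) hκ.continuous hκ.abs_le, abs_div,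
    abs_of_nonneg (sq_nonneg c), div_mul_eq_mul_div]
  exact div_le_div_of_nonneg_right (abs_defect_le hκ.abs_le (Eventually.of_forall hsupp)
    (Eventually.of_forall hB) (hB x)) (sq_nonneg c)

lemma abs_deriv_convolution_le (hG : Integrable G) (hc : c ≠ 0)
    (h0 : ∀ᵐ x, x ∉ Set.Icc (-R) R → G x = 0) (hB : ∀ x, |Aop G x| ≤ B) (x : ℝ) :
    |deriv (G ⋆ κ) x| ≤ 2 * defectBound K R / c ^ 2 * B := by
  have hsupp (x : ℝ) (hx : x ∉ Set.Icc (-(R + 1)) (R + 1)) : Aop G x = 0 :=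
    aop_eq_zero_of_notMem_Icc h0 fun hx' => hx ⟨by linarith [hx'.1], by linarith [hx'.2]⟩
  have hle (y : ℝ) : |defect κ (Aop G) y| ≤ defectBound K R * B :=
    abs_defect_le hκ.abs_le (Eventually.of_forall hsupp) (Eventually.of_forall hB) (hB y)
  rw [(hκ.hasDerivAt_convolution hG hc x).deriv, abs_div, abs_of_nonneg (sq_nonneg c),
    div_mul_eq_mul_div, mul_assoc, two_mul]
  exact div_le_div_of_nonneg_right ((abs_sub _ _).trans (add_le_add (hle _) (hle _)))
    (sq_nonneg c)

lemma lipschitzWith_deriv_convolution (hG : Integrable G) (hc : c ≠ 0)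
    (h0 : ∀ᵐ x, x ∉ Set.Icc (-R) R → G x = 0) (hB : ∀ᵐ x, |G x| ≤ B) :
    LipschitzWith (4 * defectBound K R / c ^ 2 * B).toNNReal (deriv (G ⋆ κ)) := by
  have hB0 : 0 ≤ B := hB.exists.elim fun x hx => (abs_nonneg _).trans hx
  have hsupp : ∀ᵐ x, x ∉ Set.Icc (-(R + 1)) (R + 1) → G x = 0 :=
    h0.mono fun x h hx => h fun hx' => hx ⟨by linarith [hx'.1], by linarith [hx'.2]⟩
  have hbound : 0 ≤ defectBound K R := zero_le_one.trans (hκ.one_le_defectBound R)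
  have hlip := lipschitzWith_aop
    ((hκ.continuous_convolution hG).locallyIntegrable.sub hG.locallyIntegrable)
    (hB.mono fun x hx => abs_defect_le hκ.abs_le hsupp hB hx)
  have hdist (x y : ℝ) := hlip.dist_le_mul x y
  rw [← defect, aop_defect hG hκ.continuous hκ.abs_le,
    Real.coe_toNNReal _ (by positivity)] at hdist
  refine LipschitzWith.of_dist_le' fun x y => ?_
  have h₁ := hdist (x + 1 / 2) (y + 1 / 2)
  have h₂ := hdist (x - 1 / 2) (y - 1 / 2)
  rw [dist_add_right] at h₁
  rw [dist_sub_right] at h₂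
  rw [(hκ.hasDerivAt_convolution hG hc x).deriv, (hκ.hasDerivAt_convolution hG hc y).deriv,
    Real.dist_eq, ← sub_div, abs_div, abs_of_nonneg (sq_nonneg c), sub_sub_sub_comm]
  calc _ ≤ (2 * (defectBound K R * B) * dist x y + 2 * (defectBound K R * B) * dist x y) / c ^ 2 :=
        div_le_div_of_nonneg_right ((abs_sub _ _).trans (add_le_add h₁ h₂)) (sq_nonneg c)
    _ = 4 * defectBound K R / c ^ 2 * B * dist x y := by ring

lemma solutionBound_pos (hc : c ≠ 0) (R : ℝ) : 0 < solutionBound c K R :=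
  mul_pos (by positivity)
    (div_pos (zero_lt_one.trans_le (hκ.one_le_defectBound R)) (sq_pos_of_ne_zero hc))

lemma mul_defectBound_le_solutionBound_mul {n : ℝ} (hn : n ≤ 4 + |1 - c ^ 2|) (hB : 0 ≤ B) :
    n * (defectBound K R / c ^ 2) * B ≤ solutionBound c K R * B :=
  mul_le_mul_of_nonneg_right (mul_le_mul_of_nonneg_right hn
    (div_nonneg (zero_le_one.trans (hκ.one_le_defectBound R)) (sq_nonneg c))) hB

lemma abs_normalizeAtZero_convolution_snd_le (hG : Integrable G) (hc : c ≠ 0)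
    (h0 : ∀ᵐ x, x ∉ Set.Icc (-R) R → G x = 0) (hB : ∀ x, |Aop (Aop G) x| ≤ B) :
    |(normalizeAtZero c (G ⋆ κ)).2| ≤ solutionBound c K R * B := by
  refine (abs_normalizeAtZero_snd_le c (hκ.abs_convolution_le hG hc h0 hB)).trans ?_
  rw [← mul_assoc]
  exact hκ.mul_defectBound_le_solutionBound_mul (by linarith) ((abs_nonneg _).trans (hB 0))

lemma abs_normalizeAtZero_convolution_fst_le (hG : Integrable G) (hc : c ≠ 0)
    (h0 : ∀ᵐ x, x ∉ Set.Icc (-R) R → G x = 0) (hB : ∀ x, |Aop (Aop G) x| ≤ B) (x : ℝ) :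
    |(normalizeAtZero c (G ⋆ κ)).1 x| ≤ solutionBound c K R * B := by
  refine (abs_normalizeAtZero_fst_le c (hκ.abs_convolution_le hG hc h0 hB) x).trans ?_
  rw [← mul_assoc]
  exact hκ.mul_defectBound_le_solutionBound_mul (by linarith [abs_nonneg (1 - c ^ 2)])
    ((abs_nonneg _).trans (hB 0))

lemma abs_deriv_normalizeAtZero_convolution_le (hG : Integrable G) (hc : c ≠ 0)
    (h0 : ∀ᵐ x, x ∉ Set.Icc (-R) R → G x = 0) (hB : ∀ x, |Aop G x| ≤ B) (x : ℝ) :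
    |deriv (normalizeAtZero c (G ⋆ κ)).1 x| ≤ solutionBound c K R * B := by
  rw [deriv_normalizeAtZero]
  refine (hκ.abs_deriv_convolution_le hG hc h0 hB x).trans ?_
  rw [mul_div_assoc]
  exact hκ.mul_defectBound_le_solutionBound_mul (by linarith [abs_nonneg (1 - c ^ 2)])
    ((abs_nonneg _).trans (hB 0))

lemma lipschitzWith_deriv_normalizeAtZero_convolution (hG : Integrable G) (hc : c ≠ 0)
    (h0 : ∀ᵐ x, x ∉ Set.Icc (-R) R → G x = 0) (hB : ∀ᵐ x, |G x| ≤ B) :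
    LipschitzWith (solutionBound c K R * B).toNNReal (deriv (normalizeAtZero c (G ⋆ κ)).1) := by
  have hB0 : 0 ≤ B := hB.exists.elim fun x hx => (abs_nonneg _).trans hx
  rw [deriv_normalizeAtZero]
  refine (hκ.lipschitzWith_deriv_convolution hG hc h0 hB).weaken (Real.toNNReal_le_toNNReal ?_)
  rw [mul_div_assoc]
  exact hκ.mul_defectBound_le_solutionBound_mul (by linarith [abs_nonneg (1 - c ^ 2)]) hB0

lemma isX_normalizeAtZero_convolution (hc : c ≠ 0) (hG : MemLp G ⊤)
    (h0 : ∀ᵐ x, x ∉ Set.Icc (-R) R → G x = 0) : IsX (normalizeAtZero c (G ⋆ κ)).1 := by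
  obtain ⟨B, hB⟩ := exists_ae_abs_le_of_memLp_top hG
  have hInt := integrable_of_memLp_top_of_ae_eq_zero measure_Icc_lt_top hG h0
  have hAB := abs_aop_le hB
  have hdiff : Differentiable ℝ (normalizeAtZero c (G ⋆ κ)).1 := fun x =>
    (hκ.hasDerivAt_convolution hInt hc x).differentiableAt.sub_const _
  have hS := hκ.abs_normalizeAtZero_convolution_fst_le hInt hc h0
    (abs_aop_le (Eventually.of_forall hAB))
  have hS' := hκ.abs_deriv_normalizeAtZero_convolution_le hInt hc h0 hAB
  have hlip := hκ.lipschitzWith_deriv_normalizeAtZero_convolution hInt hc h0 hB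
  have hlim := (hκ.tendsto_convolution hInt).sub_const ((G ⋆ κ) 0)
  exact ⟨⟨hdiff, ⟨_, fun x => ⟨hS x, hS' x⟩⟩, _, hlip⟩, sub_self _, _, hlim⟩

end IsDecayingKernel

end Existence

section Uniqueness

variable {c k C : ℝ} {f g v w : ℝ → ℝ}

lemma tendsto_convolution_dilation (hf : Integrable f) (hw : Continuous w) (hC : ∀ x, |w x| ≤ C)
    (x : ℝ) :
    Tendsto (fun r : ℝ => ((fun y => r * f (r * y)) ⋆ w) x) atTop (𝓝 ((∫ z, f z) * w x)) := by
  have hlim : Tendsto (fun r : ℝ => ∫ z, f z * w (x - z / r)) atTop (𝓝 (∫ z, f z * w x)) := by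
    refine tendsto_integral_filter_of_dominated_convergence (fun z => |f z| * C)
      (Eventually.of_forall fun r => hf.aestronglyMeasurable.mul
        (by fun_prop : Continuous fun z => w (x - z / r)).aestronglyMeasurable)
      (Eventually.of_forall fun r => Eventually.of_forall fun z => ?_) (hf.abs.mul_const C)
      (Eventually.of_forall fun z => ?_)
    · simpa using mul_le_mul_of_nonneg_left (hC (x - z / r)) (abs_nonneg (f z))
    · refine ((hw.tendsto x).comp ?_).const_mul (f z)
      simpa using (tendsto_id.const_div_atTop z).const_sub x
  rw [integral_mul_const] at hlim
  refine hlim.congr' ?_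
  filter_upwards [eventually_gt_atTop 0] with r hr
  have hscale := Measure.integral_comp_mul_left (fun z => f z * w (x - z / r)) r
  rw [abs_of_pos (inv_pos.mpr hr), smul_eq_mul, eq_inv_mul_iff_mul_eq₀ hr.ne',
    ← integral_const_mul] at hscale
  rw [convolution_lsmul, ← hscale]
  simp only [mul_div_cancel_left₀ _ hr.ne', smul_eq_mul, mul_assoc]

lemma eq_zero_of_forall_cosTransform_convolution_eq_zero (hw : Continuous w)
    (hC : ∀ x, |w x| ≤ C)
    (h : ∀ χ, HasCompactSupport χ → ContDiff ℝ ∞ χ → cosTransform χ ⋆ w = 0) : w = 0 := by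
  let χ : ContDiffBump (0 : ℝ) := ⟨1, 2, one_pos, one_lt_two⟩
  have hC_int : Integrable (cosTransform χ) :=
    integrable_cosTransform χ.hasCompactSupport χ.contDiff
  have hmass : ∫ z, cosTransform χ z = 2 * π := by
    have hinv := cosTransform_cosTransform χ.continuous χ.integrable χ.neg hC_int 0
    rw [χ.one_of_mem_closedBall (by simp [χ.rIn_pos.le]), mul_one] at hinv
    simpa [cosTransform] using hinv
  ext x
  have hlim := tendsto_convolution_dilation hC_int hw hC x
  have hvanish : ∀ᶠ r : ℝ in atTop, ((fun y => r * cosTransform χ (r * y)) ⋆ w) x = 0 := by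
    filter_upwards [eventually_gt_atTop 0] with r hr
    have hdilate : cosTransform (fun t => χ (r⁻¹ * t)) = fun y => r * cosTransform χ (r * y) := by
      ext y
      simpa [hr.ne'] using cosTransform_comp_mul_left (inv_pos.mpr hr) χ (r * y)
    have hsupp : HasCompactSupport fun t => χ (r⁻¹ * t) :=
      χ.hasCompactSupport.comp_homeomorph (Homeomorph.mulLeft₀ r⁻¹ (inv_ne_zero hr.ne'))
    rw [← hdilate, h _ hsupp (χ.contDiff.comp (by fun_prop)), Pi.zero_apply]
  have hzero := tendsto_nhds_unique (tendsto_const_nhds.congr' (hvanish.mono fun _ => Eq.symm)) hlim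
  rw [hmass] at hzero
  exact (mul_eq_zero.mp hzero.symm).resolve_left two_pi_pos.ne'

lemma secondDiff_convolution (hf : Integrable f) (hw : Continuous w) (hC : ∀ x, |w x| ≤ C) :
    secondDiff f ⋆ w = secondDiff (f ⋆ w) := by
  have hshift (a x : ℝ) : ((fun y => f (y + a)) ⋆ w) x = (f ⋆ w) (x + a) := by
    rw [convolution_lsmul, convolution_lsmul,
      ← integral_add_right_eq_self (fun t => f t • w (x + a - t)) a]
    simp only [add_sub_add_right_eq_sub]
  have hexists {f : ℝ → ℝ} (hf : Integrable f) :=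
    convolutionExists_of_integrable_of_bounded hf hw.aestronglyMeasurable hC
  have hplus := hf.comp_add_right 1
  have hminus := hf.comp_add_right (-1)
  have hsum : secondDiff f = (fun y => f (y + 1)) + ((-2 : ℝ) • f + fun y => f (y + -1)) := by
    ext y
    simp only [secondDiff, Pi.add_apply, Pi.smul_apply, smul_eq_mul]
    ring_nf
  rw [hsum, (hexists hplus).add_distrib (hexists ((hf.smul (-2 : ℝ)).add hminus)),
    (hexists (hf.smul (-2 : ℝ))).add_distrib (hexists hminus), smul_convolution]
  ext x
  simp only [Pi.add_apply, Pi.smul_apply, hshift, smul_eq_mul, secondDiff]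
  ring_nf

lemma eq_zero_of_oscillator {v' : ℝ → ℝ} (hk : k ≠ 0) (hv : ∀ x, HasDerivAt v (v' x) x)
    (hv' : ∀ x, HasDerivAt v' (-k ^ 2 * v x) x) (hlim : Tendsto v atTop (𝓝 0))
    (hlim' : Tendsto v' atTop (𝓝 0)) : v = 0 := by
  have henergy (x : ℝ) : HasDerivAt (fun x => k ^ 2 * v x ^ 2 + v' x ^ 2) 0 x := by
    refine ((((hv x).fun_pow 2).const_mul (k ^ 2)).add ((hv' x).fun_pow 2)).congr_deriv ?_
    ring
  have hconst := is_const_of_deriv_eq_zero (fun x => (henergy x).differentiableAt)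
    (fun x => (henergy x).deriv)
  have henergy_lim : Tendsto (fun x => k ^ 2 * v x ^ 2 + v' x ^ 2) atTop (𝓝 0) := by
    simpa using ((hlim.pow 2).const_mul (k ^ 2)).add (hlim'.pow 2)
  ext x
  have hzero : k ^ 2 * v x ^ 2 + v' x ^ 2 = 0 :=
    tendsto_nhds_unique (tendsto_const_nhds.congr fun y => hconst x y) henergy_lim
  have hmul : k ^ 2 * v x ^ 2 = 0 :=
    ((add_eq_zero_iff_of_nonneg (by positivity) (sq_nonneg _)).mp hzero).1
  simpa [hk] using hmul

lemma eq_aop_aop_div_of_mop_eq_zero (hc : c ≠ 0) (hM : Mop c w = 0) :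
    w = fun x => Aop (Aop w) x / c ^ 2 := by
  ext x
  rw [eq_div_iff (pow_ne_zero 2 hc), mul_comm]
  exact (sub_eq_zero.mp (congrFun hM x)).symm

lemma hasDerivAt_of_mop_eq_zero (hc : c ≠ 0) (hw : Continuous w) (hM : Mop c w = 0) (x : ℝ) :
    HasDerivAt w ((Aop w (x + 1 / 2) - Aop w (x - 1 / 2)) / c ^ 2) x := by
  have h := (hasDerivAt_aop (continuous_aop hw.locallyIntegrable) x).div_const (c ^ 2)
  rwa [← eq_aop_aop_div_of_mop_eq_zero hc hM] at h

lemma hasDerivAt_aop_sub_aop (hw : Continuous w) (x : ℝ) :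
    HasDerivAt (fun x => Aop w (x + 1 / 2) - Aop w (x - 1 / 2)) (secondDiff w x) x := by
  refine (((hasDerivAt_aop hw _).comp_add_const x (1 / 2)).sub
    ((hasDerivAt_aop hw _).comp_sub_const x (1 / 2))).congr_deriv ?_
  rw [secondDiff]
  ring_nf

lemma IsCofactor.secondDiff_cosTransform_convolution (hg : IsCofactor c k g) (hw : Continuous w)
    (hC : ∀ x, |w x| ≤ C) (hM : Mop c w = 0) {χ : ℝ → ℝ} (hχ : HasCompactSupport χ)
    (hχ' : ContDiff ℝ ∞ χ) (x : ℝ) :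
    secondDiff (cosTransform χ ⋆ w) x = -(c ^ 2 * k ^ 2) * (cosTransform χ ⋆ w) x := by
  have hg_smooth : ContDiff ℝ ∞ g :=
    contDiff_iff_contDiffAt.mpr fun x => (hg.analyticAt x).contDiffAt
  set θ : ℝ → ℝ := fun t => χ t * (t ^ 2 + c ^ 2 / g t)
  have hθ : HasCompactSupport θ := hχ.mul_right
  have hθ' : ContDiff ℝ ∞ θ := hχ'.mul
    ((contDiff_id.pow 2).add (contDiff_const.div hg_smooth hg.ne_zero))
  have hχ_int := hχ'.continuous.integrable_of_hasCompactSupport (μ := volume) hχ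
  have hθ_int := hθ'.continuous.integrable_of_hasCompactSupport (μ := volume) hθ
  have hCχ := integrable_cosTransform hχ hχ'
  have hCθ := integrable_cosTransform hθ hθ'
  have hsymbol : secondDiff (cosTransform χ) =
      (-(c ^ 2 * k ^ 2)) • cosTransform χ + (-1 : ℝ) • Mop c (cosTransform θ) := by
    rw [secondDiff_cosTransform hχ_int, mop_cosTransform c hθ_int]
    have hmul : (fun t => -(t ^ 2 * symb t ^ 2 * χ t)) =
        fun t => -(c ^ 2 * k ^ 2) * χ t - msymb c t * θ t := by
      ext t
      have hm := hg.msymb_eq t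
      have hdiv : msymb c t * (c ^ 2 / g t) = (t ^ 2 - k ^ 2) * c ^ 2 := by
        rw [hm, mul_assoc, mul_div_cancel₀ _ (hg.ne_zero t)]
      rw [msymb] at hm hdiv
      simp only [θ, msymb]
      linear_combination χ t * hdiv
    rw [hmul, cosTransform_sub (hχ_int.const_mul _) (integrable_msymb_mul c hθ_int),
      cosTransform_const_mul]
    ext y
    simp only [Pi.add_apply, Pi.smul_apply, smul_eq_mul]
    ring
  have hexists {f : ℝ → ℝ} (hf : Integrable f) :=
    convolutionExists_of_integrable_of_bounded hf hw.aestronglyMeasurable hC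
  rw [← secondDiff_convolution hCχ hw hC, hsymbol, (hexists (hCχ.smul _)).add_distrib
    (hexists ((integrable_mop hCθ).smul _)), smul_convolution, smul_convolution,
    mop_convolution hCθ hw hC, ← convolution_mop hCθ hw hC, hM, convolution_zero]
  simp

theorem IsCofactor.eq_zero_of_mop_eq_zero (hg : IsCofactor c k g) (hc : c ≠ 0) (hk : k ≠ 0)
    (hw : Continuous w) (hC : ∀ x, |w x| ≤ C) (hlim : Tendsto w atTop (𝓝 0))
    (hM : Mop c w = 0) : w = 0 := by
  refine eq_zero_of_forall_cosTransform_convolution_eq_zero hw hC fun χ hχ hχ' => ?_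
  have hCχ := integrable_cosTransform hχ hχ'
  set u := cosTransform χ ⋆ w
  have hu : Continuous u := continuous_convolution_of_bounded hCχ hw hC
  have hu_bound := abs_convolution_le_integral_mul hCχ hC
  have hMu : Mop c u = 0 := by rw [← convolution_mop hCχ hw hC, hM, convolution_zero]
  have hu_lim : Tendsto u atTop (𝓝 0) := by
    simpa using tendsto_convolution_atTop hCχ hw.measurable hC hlim
  have hosc (x : ℝ) : secondDiff u x = -(c ^ 2 * k ^ 2) * u x :=
    hg.secondDiff_cosTransform_convolution hw hC hM hχ hχ' x
  have hAu (a : ℝ) : Tendsto (fun x => Aop u (x + a)) atTop (𝓝 0) :=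
    (tendsto_aop_atTop hu hu_bound hu_lim).comp (tendsto_atTop_add_const_right _ a tendsto_id)
  refine eq_zero_of_oscillator hk (hasDerivAt_of_mop_eq_zero hc hu hMu) (fun x => ?_) hu_lim ?_
  · refine ((hasDerivAt_aop_sub_aop hu x).div_const (c ^ 2)).congr_deriv ?_
    rw [hosc]
    field_simp
  · simpa [sub_eq_add_neg] using ((hAu (1 / 2)).sub (hAu (-(1 / 2)))).div_const (c ^ 2)

lemma tendsto_mop_atTop {l : ℝ} (hw : Continuous w) (hC : ∀ x, |w x| ≤ C)
    (hl : Tendsto w atTop (𝓝 l)) : Tendsto (Mop c w) atTop (𝓝 ((1 - c ^ 2) * l)) := by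
  have hA2 := tendsto_aop_atTop (continuous_aop hw.locallyIntegrable)
    (abs_aop_le (Eventually.of_forall hC)) (tendsto_aop_atTop hw hC hl)
  rw [sub_mul, one_mul]
  exact hA2.sub (hl.const_mul (c ^ 2))

theorem IsCofactor.eq_and_eq_of_mop_eq_add (hg : IsCofactor c k g) (hc : c ≠ 0) (hk : k ≠ 0)
    {F S T : ℝ → ℝ} {η ζ : ℝ} (hS : IsX S) (hT : IsX T) (hMS : ∀ x, Mop c S x = F x + η)
    (hMT : ∀ x, Mop c T x = F x + ζ) : S = T ∧ η = ζ := by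
  obtain ⟨⟨hSd, ⟨C, hSC⟩, -⟩, hS0, l, hSl⟩ := hS
  obtain ⟨⟨hTd, ⟨D, hTD⟩, -⟩, hT0, l', hTl⟩ := hT
  set w := S - T
  set d := l - l'
  have hw : Continuous w := hSd.continuous.sub hTd.continuous
  have hw_bound (x : ℝ) : |w x| ≤ C + D :=
    (abs_sub _ _).trans (add_le_add (hSC x).1 (hTD x).1)
  have hw_lim : Tendsto w atTop (𝓝 d) := hSl.sub hTl
  have hMw : Mop c w = fun _ => η - ζ := by
    ext x
    rw [mop_sub c hSd.continuous.locallyIntegrable hTd.continuous.locallyIntegrable,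
      Pi.sub_apply, hMS, hMT, add_sub_add_left_eq_sub]
  have hd : η - ζ = (1 - c ^ 2) * d :=
    tendsto_nhds_unique tendsto_const_nhds (hMw ▸ tendsto_mop_atTop hw hw_bound hw_lim)
  have hwd : w - (fun _ => d) = 0 := by
    refine hg.eq_zero_of_mop_eq_zero hc hk (hw.sub continuous_const)
      (fun x => (abs_sub _ _).trans (add_le_add_left (hw_bound x) |d|)) ?_ ?_
    · exact sub_self d ▸ hw_lim.sub_const d
    · ext x
      rw [mop_sub c hw.locallyIntegrable continuous_const.locallyIntegrable, Pi.sub_apply,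
        mop_const, hMw, hd, sub_self, Pi.zero_apply]
  have hwx (x : ℝ) : S x - T x = d := sub_eq_zero.mp (congrFun hwd x)
  have hd0 : d = 0 := by rw [← hwx 0, hS0, hT0, sub_self]
  exact ⟨funext fun x => sub_eq_zero.mp ((hwx x).trans hd0),
    sub_eq_zero.mp (by rw [hd, hd0, mul_zero])⟩

end Uniqueness

theorem stmt8_general {c kc : ℝ} (ha : msymb c kc = 0) (hm' : deriv (msymb c) kc ≠ 0)
    (hroots : ∀ k, k ≠ kc → k ≠ -kc → msymb c k ≠ 0) (R : ℝ) :
    ∃ CM : ℝ, 0 < CM ∧ ∃ L : (ℝ → ℝ) →ₗ[ℝ] (ℝ → ℝ) × ℝ,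
      ∀ G : ℝ → ℝ, MemLp G ⊤ → (∀ᵐ x, x ∉ Set.Icc (-R) R → G x = 0) →
        (IsX (L G).1 ∧
         (∀ x, Mop c (L G).1 x = Aop (Aop G) x + (L G).2) ∧
         (∀ (S : ℝ → ℝ) (η : ℝ), IsX S → (∀ x, Mop c S x = Aop (Aop G) x + η) →
            S = (L G).1 ∧ η = (L G).2) ∧
         (∀ B2 : ℝ, (∀ x, |Aop (Aop G) x| ≤ B2) →
            |(L G).2| ≤ CM * B2 ∧ ∀ x, |(L G).1 x| ≤ CM * B2) ∧
         (∀ B1 : ℝ, (∀ x, |Aop G x| ≤ B1) → ∀ x, |deriv (L G).1 x| ≤ CM * B1) ∧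
         (∀ B0 : ℝ, (∀ᵐ x, |G x| ≤ B0) →
            LipschitzWith (Real.toNNReal (CM * B0)) (deriv (L G).1))) := by
  have hk := ne_zero_of_deriv_msymb_ne_zero hm'
  have hc := speed_ne_zero_of_deriv_msymb_ne_zero ha hm'
  obtain ⟨g, hg⟩ := exists_isCofactor ha hm' hroots
  obtain ⟨K, κ, hκ⟩ := hg.exists_isDecayingKernel hc hk
  obtain ⟨T, hT⟩ := exists_linearMap_eq_convolution hκ.continuous hκ.abs_le
  refine ⟨solutionBound c K R, hκ.solutionBound_pos hc R, normalizeAtZero c ∘ₗ T,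
    fun G hG h0 => ?_⟩
  have hInt := integrable_of_memLp_top_of_ae_eq_zero measure_Icc_lt_top hG h0
  rw [LinearMap.comp_apply, hT G hInt]
  have hX := hκ.isX_normalizeAtZero_convolution hc hG h0
  have hM (x : ℝ) : Mop c (normalizeAtZero c (G ⋆ κ)).1 x =
      Aop (Aop G) x + (normalizeAtZero c (G ⋆ κ)).2 := by
    rw [mop_normalizeAtZero (hκ.continuous_convolution hInt), hκ.mop_convolution hInt]
  exact ⟨hX, hM, fun S η hS hMS => hg.eq_and_eq_of_mop_eq_add hc hk hS hX hMS hM,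
    fun B hB => ⟨hκ.abs_normalizeAtZero_convolution_snd_le hInt hc h0 hB,
      hκ.abs_normalizeAtZero_convolution_fst_le hInt hc h0 hB⟩,
    fun B hB => hκ.abs_deriv_normalizeAtZero_convolution_le hInt hc h0 hB,
    fun B hB => hκ.lipschitzWith_deriv_normalizeAtZero_convolution hInt hc h0 hB⟩

/-- the affine problem `M S = A² G + η` has a unique solution
`(S, η) ∈ X × ℝ` depending linearly on `G`, with estimates `|η| ≤ C_M ‖A²G‖_∞`,
`‖S‖_∞ ≤ C_M ‖A²G‖_∞`, `‖S'‖_∞ ≤ C_M ‖A G‖_∞`, `‖S''‖_∞ ≤ C_M ‖G‖_∞`. -/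
theorem stmt8 (c kc : ℝ) (hc0 : 0 < c) (hc1 : c < 1) (hkc : 0 < kc)
    (ha : symb kc = c) (hm' : deriv (msymb c) kc ≠ 0)
    (hroots : ∀ k : ℝ, k ≠ kc → k ≠ -kc → msymb c k ≠ 0) :
    ∃ CM : ℝ, 0 < CM ∧ ∃ L : (ℝ → ℝ) →ₗ[ℝ] (ℝ → ℝ) × ℝ,
      ∀ G : ℝ → ℝ, Measurable G →
        (∃ B : ℝ, ∀ᵐ x ∂(volume : Measure ℝ), |G x| ≤ B) →
        (∀ᵐ x ∂(volume : Measure ℝ), x ∉ Set.Icc (-1 : ℝ) 1 → G x = 0) →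
        (IsX (L G).1 ∧
         (∀ x, Mop c (L G).1 x = Aop (Aop G) x + (L G).2) ∧
         (∀ (S : ℝ → ℝ) (η : ℝ), IsX S → (∀ x, Mop c S x = Aop (Aop G) x + η) →
            S = (L G).1 ∧ η = (L G).2) ∧
         (∀ B2 : ℝ, (∀ x, |Aop (Aop G) x| ≤ B2) →
            |(L G).2| ≤ CM * B2 ∧ ∀ x, |(L G).1 x| ≤ CM * B2) ∧
         (∀ B1 : ℝ, (∀ x, |Aop G x| ≤ B1) → ∀ x, |deriv (L G).1 x| ≤ CM * B1) ∧
         (∀ B0 : ℝ, 0 ≤ B0 → (∀ᵐ x ∂(volume : Measure ℝ), |G x| ≤ B0) →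
            LipschitzWith (Real.toNNReal (CM * B0)) (deriv (L G).1))) := by
  obtain ⟨CM, hCM, L, hL⟩ := stmt8_general (by simp [msymb, ha]) hm' hroots 1
  refine ⟨CM, hCM, L, fun G hG ⟨B, hB⟩ h0 => ?_⟩
  obtain ⟨hX, hM, huniq, hS, hS', hlip⟩ :=
    hL G (memLp_top_of_bound hG.aestronglyMeasurable B hB) h0
  exact ⟨hX, hM, huniq, hS, hS', fun B _ => hlip B⟩
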